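/- arXiv:math/0607660 — 2 statements merged into one kernel-verified Lean document; each statement's English description precedes it below -/
import Mathlib

section
/- Let k be a field of prime characteristic p with [k : k^p] < ∞, let R = k[x₁, …, xₙ], and let a be an ideal of R generated by m polynomials of degree at most d. Let e₀ be a positive integer such that p^{e₀} > m d, and set N = C(md + n, n) (the binomial coefficient). Then for every F-jumping exponent α of a there exist nonnegative integers s ≤ e₀ + N and b with 1 ≤ b ≤ N such that p^{s}(p^{b} − 1)α is a nonnegative integer; in particular every F-jumping exponent of a is rational with denominator of the form p^{s}(p^{b} − 1) or p^{s}. -/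
/-!
Since `k` is finite over `k^q`, the polynomial ring `R` has coordinates over its subring of `q`-th
powers, for `q = p^e`. They show that `f ∈ J^{[q]}` exactly when all coordinates of `f` lie in `J`
(`FrobCoords.mem_bracketPow_iff`), hence that `b ↦ b^{[1/q]}` is left adjoint to `J ↦ J^{[q]}`
(`FrobCoords.frobRoot_le_iff`) and that `(I^{[q]} b)^{[1/q]} = I b^{[1/q]}`. This yields two
operations on the jumping exponents of an ideal `a` with `m` generators.

* If `α` is a jumping exponent, so is `p α`, because `τ(a^c) = τ(a^{pc})^{[1/p]}`.
* If `α > m` is a jumping exponent, so is `α - 1`, because `τ(a^c) = a τ(a^{c-1})` for `c ≥ m`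
  (Skoda).

The coordinates of a polynomial `f` have degree at most `deg f / q`, so for `c ≤ m` the ideal
`τ(a^c)` is generated by its elements of degree at most `m d`. These form a subspace of a
`k`-vector space of dimension at most `N`; it is proper when `c` is a jumping exponent, and it
shrinks strictly from one jumping exponent in `(0, m]` to the next. Such exponents are therefore
distinguished by a dimension in `{0, …, N - 1}`. Reducing `α, p α, …, p^N α` into `(0, m]` by
subtracting integers, two of the results coincide, say those of `p^i α` and `p^j α` with
`i < j ≤ N`, and then `p^i (p^{j-i} - 1) α` is an integer.
-/

open Ideal

/-- The `q`-th bracket power `J^{[q]}` of an ideal: the ideal generated by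
the `q`-th powers of the elements of `J`. -/
def bracketPow {R : Type*} [CommRing R] (J : Ideal R) (q : ℕ) : Ideal R :=
  Ideal.span ((fun x => x ^ q) '' (J : Set R))

/-- The ideal `b^{[1/q]}`: the smallest ideal `J` with `b ⊆ J^{[q]}`
(realized as the intersection of all such ideals). -/
def frobRoot {R : Type*} [CommRing R] (b : Ideal R) (q : ℕ) : Ideal R :=
  sInf {J : Ideal R | b ≤ bracketPow J q}

/-- The generalized test ideal `τ(a^c) = ⋃_{e ≥ 1} (a^{⌈c p^e⌉})^{[1/p^e]}`. -/
noncomputable def testIdeal {R : Type*} [CommRing R] (p : ℕ) (a : Ideal R) (c : ℝ) : Ideal R :=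
  ⨆ e : ℕ, frobRoot (a ^ ⌈c * (p : ℝ) ^ (e + 1)⌉₊) (p ^ (e + 1))

/-- `ν_a^J(q)`: the largest nonnegative integer `r` with `a^r ⊄ J^{[q]}`
(and `0` if there is no such `r`). -/
noncomputable def nuF {R : Type*} [CommRing R] (a J : Ideal R) (q : ℕ) : ℕ :=
  sSup {r : ℕ | ¬ a ^ r ≤ bracketPow J q}

/-- The F-threshold `c^J(a) = sup_{e ≥ 1} ν_a^J(p^e)/p^e`. -/
noncomputable def FThreshold {R : Type*} [CommRing R] (p : ℕ) (a J : Ideal R) : ℝ :=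
  ⨆ e : ℕ, (nuF a J (p ^ (e + 1)) : ℝ) / (p : ℝ) ^ (e + 1)

/-- `α > 0` is an F-jumping exponent of `a` if `τ(a^α) ≠ τ(a^c)` for all `0 ≤ c < α`. -/
def IsFJumpingExponent {R : Type*} [CommRing R] (p : ℕ) (a : Ideal R) (α : ℝ) : Prop :=
  0 < α ∧ ∀ c : ℝ, 0 ≤ c → c < α → testIdeal p a c ≠ testIdeal p a α

/-! ### Frobenius coordinates on a polynomial ring -/

/-- Coordinates exhibiting `R` as generated by finitely many elements `basis i` over its subring of
`q`-th powers: every `f` is `∑ i, (coord i f) ^ q * basis i`, and each `coord i : R → R` is additive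
and `q`-th-root linear, `coord i (x ^ q * f) = x * coord i f`. Linear independence of the `basis i`
is not demanded: these two properties alone give `f ∈ J^{[q]} ↔ ∀ i, coord i f ∈ J`. -/
structure FrobCoords (R : Type*) [CommRing R] (q : ℕ) where
  ι : Type
  fin : Fintype ι
  coord : ι → R →+ R
  basis : ι → R
  coord_pow_mul : ∀ i x f, coord i (x ^ q * f) = x * coord i f
  sum_coord : ∀ f, f = ∑ i, coord i f ^ q * basis i

/-- A basis of `L` over the image of `φ`, with coordinates pulled back to `K`. -/
lemma exists_fieldCoords {K L : Type*} [Field K] [Field L] (φ : K →+* L) (h : φ.Finite) :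
    ∃ (r : ℕ) (l : Fin r → L →+ K) (b : Fin r → L),
      (∀ i c x, l i (φ c * x) = c * l i x) ∧ ∀ x, x = ∑ i, φ (l i x) * b i := by
  let := φ.toAlgebra
  have : Module.Finite K L := h
  let B := Module.finBasis K L
  refine ⟨_, fun i => (B.coord i).toAddMonoidHom, B, fun i c x => ?_, fun x => ?_⟩
  · have := (B.coord i).map_smul c x
    rw [Algebra.smul_def] at this
    simpa using! this
  · conv_lhs => rw [← B.sum_repr x]
    simp only [Algebra.smul_def]
    rfl

lemma finite_iterateFrobenius {p : ℕ} [Fact p.Prime] {k : Type*} [Field k] [CharP k p]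
    (hk : (frobenius k p).Finite) (e : ℕ) : (iterateFrobenius k p e).Finite := by
  induction e with
  | zero =>
    have : iterateFrobenius k p 0 = RingHom.id k := by
      ext x; simp
    rw [this]; exact RingHom.Finite.id k
  | succ e ih =>
    have : iterateFrobenius k p (e + 1) = (iterateFrobenius k p e).comp (frobenius k p) := by
      ext x; simp [iterateFrobenius_def, frobenius_def, ← pow_mul, pow_succ']
    rw [this]; exact ih.comp hk

section poly
open MvPolynomial

variable {n : ℕ} {k : Type*} [Field k]

lemma shift_injective {q : ℕ} (hq : 0 < q) (u : Fin n →₀ ℕ) :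
    Function.Injective (fun v : Fin n →₀ ℕ => q • v + u) := by
  intro v w h
  ext i
  have := DFunLike.congr_fun h i
  simpa [hq.ne'] using this

/-- For `l` a coordinate on `k` over `k^q`, the polynomial whose coefficient at `x^v` is `l` of the
coefficient of `f` at `x^(q v + u)`. -/
noncomputable def polyCoordFun {q : ℕ} (hq : 0 < q) (l : k →+ k) (u : Fin n →₀ ℕ)
    (f : MvPolynomial (Fin n) k) : MvPolynomial (Fin n) k :=
  ∑ v ∈ f.support.preimage (fun v => q • v + u) (shift_injective hq u).injOn,
    monomial v (l (coeff (q • v + u) f))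

lemma coeff_polyCoordFun {q : ℕ} (hq : 0 < q) (l : k →+ k) (u : Fin n →₀ ℕ)
    (f : MvPolynomial (Fin n) k) (v : Fin n →₀ ℕ) :
    coeff v (polyCoordFun hq l u f) = l (coeff (q • v + u) f) := by
  classical
  simp only [polyCoordFun, coeff_sum, coeff_monomial, Finset.sum_ite_eq', Finset.mem_preimage,
    mem_support_iff, ne_eq]
  split_ifs with h
  · rw [h, map_zero]
  · rfl

/-- `polyCoordFun` as an additive map. -/
noncomputable def polyCoord {q : ℕ} (hq : 0 < q) (l : k →+ k) (u : Fin n →₀ ℕ) :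
    MvPolynomial (Fin n) k →+ MvPolynomial (Fin n) k where
  toFun := polyCoordFun hq l u
  map_zero' := by ext v; simp [coeff_polyCoordFun]
  map_add' f g := by ext v; simp [coeff_polyCoordFun]

lemma coeff_polyCoord {q : ℕ} (hq : 0 < q) (l : k →+ k) (u : Fin n →₀ ℕ)
    (f : MvPolynomial (Fin n) k) (v : Fin n →₀ ℕ) :
    coeff v (polyCoord hq l u f) = l (coeff (q • v + u) f) :=
  coeff_polyCoordFun hq l u f v

lemma totalDegree_polyCoord {q : ℕ} (hq : 0 < q) (l : k →+ k) (u : Fin n →₀ ℕ)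
    (f : MvPolynomial (Fin n) k) :
    q * (polyCoord hq l u f).totalDegree ≤ f.totalDegree := by
  rw [mul_comm, ← Nat.le_div_iff_mul_le hq, totalDegree, Finset.sup_le_iff]
  intro v hv
  rw [mem_support_iff, coeff_polyCoord] at hv
  have h1 : q • v + u ∈ f.support := by
    rw [mem_support_iff]
    intro h0
    exact hv (by rw [h0, map_zero])
  have h2 := le_totalDegree h1
  rw [Nat.le_div_iff_mul_le hq, mul_comm]
  refine le_trans ?_ h2
  rw [Finsupp.sum_fintype _ _ (by simp), Finsupp.sum_fintype _ _ (by simp), Finset.mul_sum]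
  exact Finset.sum_le_sum fun i _ => by simp

/-- The bound `u i < p ^ e` ensures that `x^(q s)` divides `x^(q v + u)` only when `x^s` divides
`x^v`. -/
lemma polyCoord_pow_mul {p e : ℕ} [Fact p.Prime] [CharP k p] (hq : 0 < p ^ e) (l : k →+ k)
    (hl : ∀ c x, l (c ^ p ^ e * x) = c * l x) (u : Fin n →₀ ℕ) (hu : ∀ i, u i < p ^ e)
    (x f : MvPolynomial (Fin n) k) :
    polyCoord hq l u (x ^ p ^ e * f) = x * polyCoord hq l u f := by
  classical
  induction x using MvPolynomial.induction_on' with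
  | add x y hx hy => rw [add_pow_char_pow, add_mul, map_add, hx, hy, add_mul]
  | monomial s c =>
    ext v
    rw [coeff_polyCoord, monomial_pow, coeff_monomial_mul', coeff_monomial_mul', coeff_polyCoord]
    have key : p ^ e • s ≤ p ^ e • v + u ↔ s ≤ v := by
      simp only [Finsupp.le_def]
      refine forall_congr' fun i => ?_
      have := hu i
      simp only [Finsupp.coe_smul, Finsupp.coe_add, Pi.smul_apply, Pi.add_apply, smul_eq_mul]
      constructor
      · intro h
        by_contra! h'
        have : p ^ e * (v i + 1) ≤ p ^ e * s i := Nat.mul_le_mul_left _ h'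
        rw [mul_add] at this
        omega
      · intro h
        exact (Nat.mul_le_mul_left _ h).trans (Nat.le_add_right _ _)
    by_cases h : s ≤ v
    · rw [if_pos h, if_pos (key.mpr h), hl]
      congr 3
      ext i
      have h1 := h i
      have h2 : p ^ e * s i ≤ p ^ e * v i := Nat.mul_le_mul_left _ h1
      simp only [Finsupp.coe_smul, Finsupp.coe_add, Pi.smul_apply, Pi.add_apply, smul_eq_mul,
        Finsupp.coe_tsub, Pi.sub_apply, Nat.mul_sub]
      omega
    · rw [if_neg h, if_neg (fun h' => h (key.mp h')), map_zero]

/-- The coordinates are indexed by a basis of `k` over `k^q` and the monomials `x^u` with all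
exponents `u i < q`, where `q = p ^ e`. -/
lemma exists_polyCoords {p : ℕ} [Fact p.Prime] [CharP k p]
    (hk : (frobenius k p).Finite) (e : ℕ) :
    ∃ F : FrobCoords (MvPolynomial (Fin n) k) (p ^ e),
      ∀ i f, p ^ e * (F.coord i f).totalDegree ≤ f.totalDegree := by
  classical
  obtain ⟨r, l, b, hl, hb⟩ := exists_fieldCoords _ (finite_iterateFrobenius hk e)
  simp only [iterateFrobenius_def] at hl hb
  have hq : 0 < p ^ e := pow_pos (Fact.out : p.Prime).pos e
  let U : (Fin n → Fin (p ^ e)) → (Fin n →₀ ℕ) := fun u =>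
    Finsupp.equivFunOnFinite.symm fun i => (u i : ℕ)
  have hU : ∀ u i, U u i = u i := fun u i => rfl
  refine ⟨⟨(Fin n → Fin (p ^ e)) × Fin r, inferInstance, fun i => polyCoord hq (l i.2) (U i.1),
    fun i => monomial (U i.1) (b i.2), fun i x f => ?_, fun f => ?_⟩, fun i f => ?_⟩
  · exact polyCoord_pow_mul hq _ (hl i.2) _ (fun j => (i.1 j).2) x f
  · induction f using MvPolynomial.induction_on' with
    | add x y hx hy =>
      conv_lhs => rw [hx, hy]
      rw [← Finset.sum_add_distrib]
      refine Finset.sum_congr rfl fun i _ => ?_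
      rw [map_add, add_pow_char_pow, add_mul]
    | monomial w c =>
      -- Only the residue of `w` modulo `p ^ e` contributes, and it contributes `monomial w c`.
      let u₀ : Fin n → Fin (p ^ e) := fun i => ⟨w i % p ^ e, Nat.mod_lt _ hq⟩
      let v₀ : Fin n →₀ ℕ := Finsupp.equivFunOnFinite.symm fun i => w i / p ^ e
      have hw : p ^ e • v₀ + U u₀ = w := by
        ext i
        exact Nat.div_add_mod (w i) (p ^ e)
      have h1 : ∀ j, polyCoord hq (l j) (U u₀) (monomial w c) = monomial v₀ (l j c) := by
        intro j
        ext v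
        rw [coeff_polyCoord, coeff_monomial, coeff_monomial]
        have : w = p ^ e • v + U u₀ ↔ v₀ = v := by
          conv_lhs => rw [← hw]
          exact (shift_injective hq (U u₀)).eq_iff
        simp only [this]
        split_ifs <;> simp
      have h2 : ∀ u j, u ≠ u₀ → polyCoord hq (l j) (U u) (monomial w c) = 0 := by
        intro u j hu
        ext v
        rw [coeff_polyCoord, coeff_monomial, if_neg, map_zero, coeff_zero]
        intro h
        apply hu
        funext i
        apply Fin.ext
        have h3 := DFunLike.congr_fun h i
        simp only [Finsupp.coe_smul, Finsupp.coe_add, Pi.smul_apply, Pi.add_apply, smul_eq_mul,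
          hU] at h3
        change (u i : ℕ) = w i % p ^ e
        rw [h3, Nat.mul_add_mod, Nat.mod_eq_of_lt (u i).2]
      rw [Fintype.sum_prod_type, Finset.sum_eq_single u₀]
      · simp only [h1, monomial_pow, monomial_mul, hw]
        rw [← map_sum, ← hb c]
      · intro u _ hu
        refine Finset.sum_eq_zero fun j _ => ?_
        simp only [h2 u j hu]
        rw [zero_pow hq.ne', zero_mul]
      · simp
  · exact totalDegree_polyCoord hq _ _ f

end poly

/-! ### Bracket powers, Frobenius roots and test ideals -/

section general

variable {R : Type*} [CommRing R]

lemma pow_mem_bracketPow {J : Ideal R} {q : ℕ} {x : R} (hx : x ∈ J) : x ^ q ∈ bracketPow J q :=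
  subset_span ⟨x, hx, rfl⟩

lemma bracketPow_le_iff {J I : Ideal R} {q : ℕ} :
    bracketPow J q ≤ I ↔ ∀ x ∈ J, x ^ q ∈ I := by
  rw [bracketPow, span_le, Set.image_subset_iff]
  rfl

lemma bracketPow_mono {I J : Ideal R} (h : I ≤ J) (q : ℕ) : bracketPow I q ≤ bracketPow J q :=
  bracketPow_le_iff.mpr fun _ hx => pow_mem_bracketPow (h hx)

lemma bracketPow_le_pow (J : Ideal R) (q : ℕ) : bracketPow J q ≤ J ^ q :=
  bracketPow_le_iff.mpr fun _ hx => pow_mem_pow hx q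

lemma bracketPow_mul_le (I J : Ideal R) (q : ℕ) :
    bracketPow I q * bracketPow J q ≤ bracketPow (I * J) q := by
  rw [bracketPow, bracketPow, span_mul_span', span_le]
  rintro _ ⟨_, ⟨x, hx, rfl⟩, _, ⟨y, hy, rfl⟩, rfl⟩
  simp only [← mul_pow]
  exact pow_mem_bracketPow (mul_mem_mul hx hy)

lemma bracketPow_bracketPow {p : ℕ} [Fact p.Prime] [CharP R p] (J : Ideal R) (e f : ℕ) :
    bracketPow (bracketPow J (p ^ e)) (p ^ f) = bracketPow J (p ^ (e + f)) := by
  have key : ∀ (I : Ideal R) (e : ℕ), bracketPow I (p ^ e) = I.map (iterateFrobenius R p e) :=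
    fun I e => rfl
  rw [key, key, key, map_map]
  congr 1
  ext x
  simp [iterateFrobenius_def, ← pow_mul, pow_add]

namespace FrobCoords

variable {q : ℕ} (F : FrobCoords R q)

include F

lemma mem_bracketPow_iff {J : Ideal R} {f : R} :
    f ∈ bracketPow J q ↔ ∀ i, F.coord i f ∈ J := by
  constructor
  · intro hf
    suffices ∀ r i, F.coord i (r * f) ∈ J by simpa using this 1
    refine Submodule.span_induction (p := fun f _ => ∀ r i, F.coord i (r * f) ∈ J)
      ?_ ?_ ?_ ?_ hf
    · rintro _ ⟨x, hx, rfl⟩ r i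
      simp only
      rw [mul_comm, F.coord_pow_mul]
      exact J.mul_mem_right _ hx
    · intro r i; simp
    · intro x y _ _ hx hy r i
      rw [mul_add, map_add]
      exact add_mem (hx r i) (hy r i)
    · intro c x _ hx r i
      rw [smul_eq_mul, ← mul_assoc]
      exact hx _ i
  · intro h
    let := F.fin
    rw [F.sum_coord f]
    exact sum_mem _ fun i _ => mul_mem_right _ _ (pow_mem_bracketPow (h i))

lemma le_bracketPow_frobRoot (b : Ideal R) : b ≤ bracketPow (frobRoot b q) q := by
  intro f hf
  rw [F.mem_bracketPow_iff]
  intro i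
  rw [frobRoot, Submodule.mem_sInf]
  intro J hJ
  exact F.mem_bracketPow_iff.mp (hJ hf) i

/-- `b ↦ b^{[1/q]}` is left adjoint to `J ↦ J^{[q]}`. -/
lemma frobRoot_le_iff {b J : Ideal R} : frobRoot b q ≤ J ↔ b ≤ bracketPow J q :=
  ⟨fun h => (F.le_bracketPow_frobRoot b).trans (bracketPow_mono h q), fun h => sInf_le h⟩

lemma coord_mem_frobRoot {b : Ideal R} {f : R} (hf : f ∈ b) (i : F.ι) :
    F.coord i f ∈ frobRoot b q :=
  F.mem_bracketPow_iff.mp (F.le_bracketPow_frobRoot b hf) i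

lemma frobRoot_span (S : Set R) :
    frobRoot (span S) q = span {x | ∃ i, ∃ s ∈ S, x = F.coord i s} := by
  apply le_antisymm
  · rw [F.frobRoot_le_iff, span_le]
    intro s hs
    exact F.mem_bracketPow_iff.mpr fun i => subset_span ⟨i, s, hs, rfl⟩
  · rw [span_le]
    rintro _ ⟨i, s, hs, rfl⟩
    exact F.coord_mem_frobRoot (subset_span hs) i

lemma frobRoot_mono {b b' : Ideal R} (h : b ≤ b') : frobRoot b q ≤ frobRoot b' q :=
  F.frobRoot_le_iff.mpr (h.trans (F.le_bracketPow_frobRoot b'))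

lemma frobRoot_bracketPow_mul (I b : Ideal R) :
    frobRoot (bracketPow I q * b) q = I * frobRoot b q := by
  apply le_antisymm
  · rw [F.frobRoot_le_iff]
    exact (mul_mono_right (F.le_bracketPow_frobRoot b)).trans (bracketPow_mul_le _ _ _)
  · have hb : frobRoot b q = span {x | ∃ i, ∃ s ∈ (b : Set R), x = F.coord i s} := by
      rw [← F.frobRoot_span, span_eq]
    conv_lhs => rw [hb, ← span_eq I]
    rw [span_mul_span', span_le]
    rintro _ ⟨x, hx, _, ⟨i, s, hs, rfl⟩, rfl⟩
    simp only
    rw [← F.coord_pow_mul]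
    exact F.coord_mem_frobRoot (mul_mem_mul (pow_mem_bracketPow hx) hs) i

lemma frobRoot_top (hq : q ≠ 0) : frobRoot (⊤ : Ideal R) q = ⊤ := by
  have h : (⊤ : Ideal R) ≤ bracketPow (frobRoot ⊤ q) q := F.le_bracketPow_frobRoot ⊤
  exact top_le_iff.mp (h.trans ((bracketPow_le_pow _ _).trans (pow_le_self hq)))

lemma frobRoot_bracketPow (hq : q ≠ 0) (I : Ideal R) : frobRoot (bracketPow I q) q = I := by
  have := F.frobRoot_bracketPow_mul I ⊤
  rwa [mul_top, F.frobRoot_top hq, mul_top] at this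

end FrobCoords

variable {p : ℕ} [hp : Fact p.Prime] [CharP R p] (F : ∀ e, FrobCoords R (p ^ e))

include F

lemma frobRoot_frobRoot (b : Ideal R) (e f : ℕ) :
    frobRoot (frobRoot b (p ^ e)) (p ^ f) = frobRoot b (p ^ (e + f)) := by
  refine eq_of_forall_ge_iff fun J => ?_
  rw [(F f).frobRoot_le_iff, (F e).frobRoot_le_iff, (F (e + f)).frobRoot_le_iff,
    bracketPow_bracketPow, add_comm]

/-- The ideals whose union is `τ(a^c)` form an increasing chain, since
`(a^r)^{[p]} ⊆ a^{rp}` and `⌈c p^{e+1}⌉ ≤ p ⌈c p^e⌉`. -/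
lemma frobRoot_ceil_le_succ (a : Ideal R) (c : ℝ) (e : ℕ) :
    frobRoot (a ^ ⌈c * (p : ℝ) ^ e⌉₊) (p ^ e) ≤
      frobRoot (a ^ ⌈c * (p : ℝ) ^ (e + 1)⌉₊) (p ^ (e + 1)) := by
  have hp0 : p ^ 1 ≠ 0 := by simpa using hp.out.ne_zero
  rw [add_comm e 1, ← frobRoot_frobRoot F]
  apply (F e).frobRoot_mono
  rw [← (F 1).frobRoot_bracketPow hp0 (a ^ _)]
  apply (F 1).frobRoot_mono
  refine (bracketPow_le_pow _ _).trans ?_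
  rw [← pow_mul, pow_one]
  apply pow_le_pow_right
  rw [Nat.ceil_le]
  push_cast
  rw [pow_add, pow_one, mul_comm (p : ℝ), ← mul_assoc]
  exact mul_le_mul_of_nonneg_right (Nat.le_ceil _) (Nat.cast_nonneg p)

lemma testIdeal_eventually [IsNoetherianRing R] (a : Ideal R) (c : ℝ) :
    ∃ e₁, ∀ e, e₁ ≤ e → testIdeal p a c = frobRoot (a ^ ⌈c * (p : ℝ) ^ e⌉₊) (p ^ e) := by
  have hmono : Monotone fun e => frobRoot (a ^ ⌈c * (p : ℝ) ^ e⌉₊) (p ^ e) :=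
    monotone_nat_of_le_succ (frobRoot_ceil_le_succ F a c)
  obtain ⟨e₁, h⟩ := WellFoundedGT.monotone_chain_condition ⟨_, hmono⟩
  simp only [OrderHom.coe_mk] at h
  refine ⟨e₁, fun e he => ?_⟩
  rw [← h e he]
  apply le_antisymm
  · refine iSup_le fun f => ?_
    rcases le_total (f + 1) e₁ with hf | hf
    · exact hmono hf
    · exact (h _ hf).ge
  · rw [h (e₁ + 1) (Nat.le_succ _)]
    exact le_iSup (fun e => frobRoot (a ^ ⌈c * (p : ℝ) ^ (e + 1)⌉₊) (p ^ (e + 1))) e₁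

omit hp [CharP R p] in
lemma testIdeal_anti (a : Ideal R) {c c' : ℝ} (h : c ≤ c') :
    testIdeal p a c' ≤ testIdeal p a c :=
  iSup_mono fun e => (F (e + 1)).frobRoot_mono (pow_le_pow_right (by gcongr))

omit [CharP R p] in
lemma testIdeal_zero (a : Ideal R) : testIdeal p a 0 = ⊤ := by
  refine top_le_iff.mp (le_trans ?_ (le_iSup _ 0))
  rw [zero_mul, Nat.ceil_zero, pow_zero, one_eq_top,
    (F _).frobRoot_top (pow_ne_zero _ hp.out.ne_zero)]

variable [IsNoetherianRing R]

lemma frobRoot_testIdeal_mul (a : Ideal R) (c : ℝ) :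
    frobRoot (testIdeal p a (p * c)) p = testIdeal p a c := by
  obtain ⟨e₁, h₁⟩ := testIdeal_eventually F a c
  obtain ⟨e₂, h₂⟩ := testIdeal_eventually F a (p * c)
  rw [h₁ (max e₁ e₂ + 1) (by omega), h₂ (max e₁ e₂) (by omega), ← frobRoot_frobRoot F, pow_one,
    pow_succ' (p : ℝ)]
  ring_nf

/-- Skoda's theorem `τ(a^c) = a τ(a^{c-1})` for `c ≥ m`; the hypothesis `ha` holds for an ideal with
`m` generators. -/
lemma testIdeal_skoda (a : Ideal R) {m : ℕ} (hm : 1 ≤ m)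
    (ha : ∀ q r : ℕ, m * q ≤ r → a ^ r ≤ bracketPow a q * a ^ (r - q))
    {c : ℝ} (hc : (m : ℝ) ≤ c) :
    testIdeal p a c = a * testIdeal p a (c - 1) := by
  obtain ⟨e₁, h₁⟩ := testIdeal_eventually F a c
  obtain ⟨e₂, h₂⟩ := testIdeal_eventually F a (c - 1)
  set e := max e₁ e₂
  rw [h₁ e (by omega), h₂ e (by omega), ← (F e).frobRoot_bracketPow_mul]
  have h3 : ⌈(c - 1) * (p : ℝ) ^ e⌉₊ = ⌈c * (p : ℝ) ^ e⌉₊ - p ^ e := by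
    rw [sub_mul, one_mul, ← Nat.cast_pow, Nat.ceil_sub_natCast]
  have h4 : m * p ^ e ≤ ⌈c * (p : ℝ) ^ e⌉₊ := by
    have : ((m * p ^ e : ℕ) : ℝ) ≤ c * (p : ℝ) ^ e := by
      push_cast
      gcongr
    exact_mod_cast this.trans (Nat.le_ceil _)
  congr 1
  rw [h3]
  apply le_antisymm (ha _ _ h4)
  refine (mul_mono_left (bracketPow_le_pow _ _)).trans ?_
  rw [← pow_add, Nat.add_sub_cancel' ((Nat.le_mul_of_pos_left _ hm).trans h4)]

lemma IsFJumpingExponent.prime_mul {a : Ideal R} {α : ℝ} (h : IsFJumpingExponent p a α) :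
    IsFJumpingExponent p a (p * α) := by
  have hp0 : (0 : ℝ) < p := by exact_mod_cast hp.out.pos
  refine ⟨mul_pos hp0 h.1, fun c hc hcα heq => ?_⟩
  refine h.2 (c / p) (by positivity) (by rwa [div_lt_iff₀' hp0]) ?_
  rw [← frobRoot_testIdeal_mul F, ← frobRoot_testIdeal_mul F a α, mul_div_cancel₀ _ hp0.ne', heq]

/-- Skoda's theorem needs its exponent to be at least `m`, so an exponent `c < α - 1` witnessing that
`α - 1` is not a jumping exponent is first raised to `max c (m - 1)`. -/
lemma IsFJumpingExponent.sub_one {a : Ideal R} {m : ℕ} (hm : 1 ≤ m)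
    (ha : ∀ q r : ℕ, m * q ≤ r → a ^ r ≤ bracketPow a q * a ^ (r - q))
    {α : ℝ} (h : IsFJumpingExponent p a α) (hα : (m : ℝ) < α) :
    IsFJumpingExponent p a (α - 1) := by
  have hm' : (1 : ℝ) ≤ m := by exact_mod_cast hm
  refine ⟨by linarith, fun c hc hcα heq => ?_⟩
  have h1 : testIdeal p a (max c (m - 1)) = testIdeal p a (α - 1) := by
    apply le_antisymm
    · exact (testIdeal_anti F a (le_max_left _ _)).trans heq.le
    · exact testIdeal_anti F a (max_le hcα.le (by linarith))
  refine h.2 (max c (m - 1) + 1) ?_ ?_ ?_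
  · exact add_nonneg (hc.trans (le_max_left _ _)) zero_le_one
  · have := max_lt hcα (show (m : ℝ) - 1 < α - 1 by linarith)
    linarith
  · rw [testIdeal_skoda F a hm ha hα.le, ← h1,
      testIdeal_skoda F a hm ha (by linarith [le_max_right c ((m : ℝ) - 1)]), add_sub_cancel_right]

/-- Every jumping exponent is congruent modulo `ℤ` to one in `(0, m]`. -/
lemma IsFJumpingExponent.exists_reduction {a : Ideal R} {m : ℕ} (hm : 1 ≤ m)
    (ha : ∀ q r : ℕ, m * q ≤ r → a ^ r ≤ bracketPow a q * a ^ (r - q))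
    {α : ℝ} (h : IsFJumpingExponent p a α) :
    ∃ t : ℕ, IsFJumpingExponent p a (α - t) ∧ α - t ≤ m := by
  obtain ⟨M, hM⟩ := exists_nat_ge α
  suffices ∀ M : ℕ, ∀ α : ℝ, IsFJumpingExponent p a α → α ≤ M →
      ∃ t : ℕ, IsFJumpingExponent p a (α - t) ∧ α - t ≤ m from this M α h hM
  intro M
  induction M with
  | zero =>
    intro α h hM
    exact absurd h.1 (by simpa using hM)
  | succ M ih =>
    intro α h hM
    by_cases hα : α ≤ m
    · exact ⟨0, by simpa using h, by simpa using hα⟩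
    · obtain ⟨t, ht, ht'⟩ := ih (α - 1) (h.sub_one F hm ha (not_le.mp hα))
        (by push_cast at hM; linarith)
      refine ⟨t + 1, ?_, ?_⟩
      · convert ht using 1; push_cast; ring
      · convert ht' using 1; push_cast; ring

end general

/-! ### Powers of a finitely generated ideal -/

section skoda

variable {R : Type*} [CommRing R] {m : ℕ} (g : Fin m → R)

lemma span_range_pow_eq (r : ℕ) :
    span (Set.range g) ^ r = span {x | ∃ s : Fin m → ℕ, ∑ i, s i = r ∧ x = ∏ i, g i ^ s i} := by
  apply le_antisymm
  · intro x hx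
    obtain ⟨P, hP, rfl⟩ := (mem_span_pow_iff_exists_isHomogeneous g x).mp hx
    rw [MvPolynomial.eval_eq']
    refine sum_mem fun s hs => mul_mem_left _ _ (subset_span ⟨s, ?_, rfl⟩)
    have := hP (MvPolynomial.mem_support_iff.mp hs)
    rw [← this, Finsupp.weight_apply, Finsupp.sum_fintype _ _ (by simp)]
    simp
  · rw [span_le]
    rintro _ ⟨s, rfl, rfl⟩
    rw [← Finset.prod_pow_eq_pow_sum]
    refine prod_mem_prod fun i _ => pow_mem_pow ?_ _
    exact subset_span (Set.mem_range_self i)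

/-- The pigeonhole behind Skoda's theorem: a monomial of degree at least `m * q` in `m` generators
is divisible by the `q`-th power of one of them. -/
lemma span_range_pow_le (q r : ℕ) (hr : m * q ≤ r) (hm : 1 ≤ m) :
    span (Set.range g) ^ r ≤
      bracketPow (span (Set.range g)) q * span (Set.range g) ^ (r - q) := by
  classical
  conv_lhs => rw [span_range_pow_eq]
  rw [span_le]
  rintro _ ⟨s, hs, rfl⟩
  obtain ⟨j, hj⟩ : ∃ j, q ≤ s j := by
    have : Nonempty (Fin m) := ⟨⟨0, hm⟩⟩
    by_contra! h
    have := Finset.sum_lt_sum_of_nonempty (s := Finset.univ) Finset.univ_nonempty fun i _ => h i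
    simp only [Finset.sum_const, Finset.card_univ, Fintype.card_fin, smul_eq_mul] at this
    omega
  have h1 : ∏ i, g i ^ s i = g j ^ q * ∏ i, g i ^ (Function.update s j (s j - q)) i := by
    rw [← Finset.mul_prod_erase _ _ (Finset.mem_univ j),
      ← Finset.mul_prod_erase _ (fun i => g i ^ (Function.update s j (s j - q)) i)
        (Finset.mem_univ j), ← mul_assoc]
    congr 1
    · rw [Function.update_self, ← pow_add, Nat.add_sub_cancel' hj]
    · exact Finset.prod_congr rfl fun i hi => by
        rw [Function.update_of_ne (Finset.ne_of_mem_erase hi)]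
  rw [h1]
  refine mul_mem_mul (pow_mem_bracketPow (subset_span ⟨j, rfl⟩)) ?_
  rw [span_range_pow_eq]
  refine subset_span ⟨_, ?_, rfl⟩
  rw [Finset.sum_update_of_mem (Finset.mem_univ j), ← hs,
    ← Finset.add_sum_erase _ s (Finset.mem_univ j), Finset.sdiff_singleton_eq_erase]
  omega

end skoda

/-! ### Degree bounds and the count of jumping exponents -/

section degree
open MvPolynomial

variable {n : ℕ} {k : Type*} [Field k]

/-- For `c ≤ m` the test ideal `τ(a^c)` is generated by its elements of degree at most `m * d`:
`a^⌈c q⌉` is generated in degrees at most `m q d`, and Frobenius coordinates divide degrees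
by `q`. -/
lemma testIdeal_eq_span_degree {p : ℕ} [hp : Fact p.Prime] [CharP k p]
    (F : ∀ e, FrobCoords (MvPolynomial (Fin n) k) (p ^ e))
    (hF : ∀ e i f, p ^ e * ((F e).coord i f).totalDegree ≤ f.totalDegree)
    {m d : ℕ} (g : Fin m → MvPolynomial (Fin n) k) (hdeg : ∀ i, (g i).totalDegree ≤ d)
    {c : ℝ} (hc : c ≤ m) :
    testIdeal p (span (Set.range g)) c =
      span {f | f ∈ testIdeal p (span (Set.range g)) c ∧ f.totalDegree ≤ m * d} := by
  apply le_antisymm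
  · obtain ⟨e, he⟩ := testIdeal_eventually F (span (Set.range g)) c
    have he := he e le_rfl
    set T := testIdeal p (span (Set.range g)) c with hT
    conv_lhs => rw [he, span_range_pow_eq, (F e).frobRoot_span]
    rw [span_le]
    rintro _ ⟨i, _, ⟨s, hs, rfl⟩, rfl⟩
    refine subset_span ⟨?_, ?_⟩
    · rw [he]
      apply (F e).coord_mem_frobRoot
      rw [span_range_pow_eq]
      exact subset_span ⟨s, hs, rfl⟩
    · have hq : 0 < p ^ e := pow_pos hp.out.pos e
      refine Nat.le_of_mul_le_mul_left ((hF e i _).trans ?_) hq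
      calc (∏ i, g i ^ s i).totalDegree ≤ ∑ i, (g i ^ s i).totalDegree :=
            totalDegree_finsetProd _ _
        _ ≤ ∑ i, s i * d := Finset.sum_le_sum fun i _ =>
            (totalDegree_pow _ _).trans (Nat.mul_le_mul_left _ (hdeg i))
        _ = ⌈c * (p : ℝ) ^ e⌉₊ * d := by rw [← Finset.sum_mul, hs]
        _ ≤ (m * p ^ e) * d := by
            refine Nat.mul_le_mul_right _ (Nat.ceil_le.mpr ?_)
            push_cast
            gcongr
        _ = p ^ e * (m * d) := by ring
  · rw [span_le]
    exact fun f hf => hf.1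

/-- Exponents of degree at most `D` in `n` variables are counted by homogenizing them to exponents of
degree exactly `D` in `n + 1` variables. -/
lemma finrank_restrictTotalDegree_le (D : ℕ) :
    Module.finrank k (restrictTotalDegree (Fin n) k D) ≤ (D + n).choose n := by
  classical
  rw [restrictTotalDegree, Module.finrank_eq_nat_card_basis (basisRestrictSupport k _)]
  have h1 : ∀ s : {s : Fin n →₀ ℕ | (s.sum fun _ e => e) ≤ D},
      Finsupp.cons (D - s.1.sum fun _ e => e) s.1 ∈
        Finset.finsuppAntidiag (Finset.univ : Finset (Fin (n + 1))) D := by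
    rintro ⟨s, hs⟩
    rw [Finset.mem_finsuppAntidiag]
    refine ⟨?_, Finset.subset_univ _⟩
    rw [Fin.sum_univ_succ]
    simp only [Finsupp.cons_zero, Finsupp.cons_succ]
    rw [Set.mem_ofPred_eq] at hs
    rw [Finsupp.sum_fintype _ _ (by simp)] at hs ⊢
    omega
  have h2 : Function.Injective fun s : {s : Fin n →₀ ℕ | (s.sum fun _ e => e) ≤ D} =>
      (⟨_, h1 s⟩ : Finset.finsuppAntidiag (Finset.univ : Finset (Fin (n + 1))) D) := by
    intro s t h
    have h3 := congrArg (fun x => Finsupp.tail x.1) h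
    simp only [Finsupp.tail_cons] at h3
    exact Subtype.ext h3
  refine (Nat.card_le_card_of_injective _ h2).trans ?_
  rw [Nat.card_eq_fintype_card, Fintype.card_coe, Finset.card_finsuppAntidiag_nat_eq_choose,
    Finset.card_univ, Fintype.card_fin]
  have : n + 1 + D - 1 = D + n := by omega
  rw [this, Nat.choose_symm_add]

/-- The `k`-vector space of elements of `τ(a^c)` of total degree at most `m * d`. -/
noncomputable def degPart (p m d : ℕ) (a : Ideal (MvPolynomial (Fin n) k)) (c : ℝ) :
    Submodule k (MvPolynomial (Fin n) k) :=
  (testIdeal p a c).restrictScalars k ⊓ restrictTotalDegree (Fin n) k (m * d)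

variable {p : ℕ} [hp : Fact p.Prime] [CharP k p]
  (F : ∀ e, FrobCoords (MvPolynomial (Fin n) k) (p ^ e))

include F

omit [CharP k p] in
/-- The inequality is strict because `τ(a^α) ≠ τ(a^0) = R`, so that `1` is missing from `τ(a^α)`. -/
lemma finrank_degPart_lt {m d : ℕ} {a : Ideal (MvPolynomial (Fin n) k)} {α : ℝ}
    (hα : IsFJumpingExponent p a α) :
    Module.finrank k (degPart p m d a α) < (m * d + n).choose n := by
  refine lt_of_lt_of_le ?_ (finrank_restrictTotalDegree_le (k := k) (m * d))
  apply Submodule.finrank_lt_finrank_of_lt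
  refine lt_of_le_of_ne inf_le_right fun h => ?_
  have h1 : (1 : MvPolynomial (Fin n) k) ∈ degPart p m d a α := by
    rw [h, mem_restrictTotalDegree]
    simp
  apply hα.2 0 le_rfl hα.1
  rw [testIdeal_zero F, (eq_top_iff_one _).mpr h1.1]

lemma finrank_degPart_strictAnti
    (hF : ∀ e i f, p ^ e * ((F e).coord i f).totalDegree ≤ f.totalDegree)
    {m d : ℕ} (g : Fin m → MvPolynomial (Fin n) k) (hdeg : ∀ i, (g i).totalDegree ≤ d)
    {α β : ℝ} (hα : IsFJumpingExponent p (span (Set.range g)) α)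
    (hβ : IsFJumpingExponent p (span (Set.range g)) β) (hβm : β ≤ m) (h : α < β) :
    Module.finrank k (degPart p m d (span (Set.range g)) β) <
      Module.finrank k (degPart p m d (span (Set.range g)) α) := by
  have : Module.Finite k (degPart p m d (span (Set.range g)) α) :=
    Submodule.finiteDimensional_of_le (S₂ := restrictTotalDegree (Fin n) k (m * d)) inf_le_right
  apply Submodule.finrank_lt_finrank_of_lt
  refine lt_of_le_of_ne (inf_le_inf_right _ (testIdeal_anti F _ h.le)) fun heq => ?_
  apply hβ.2 α hα.1.le h
  rw [testIdeal_eq_span_degree F hF g hdeg hβm,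
    testIdeal_eq_span_degree F hF g hdeg (h.le.trans hβm)]
  congr 1
  ext f
  have := SetLike.ext_iff.mp heq f
  simp only [degPart, Submodule.mem_inf, Submodule.restrictScalars_mem,
    mem_restrictTotalDegree] at this
  exact this.symm

end degree

lemma not_isFJumpingExponent_bot {R : Type*} [CommRing R] {p : ℕ} (hp : 0 < p) (α : ℝ) :
    ¬ IsFJumpingExponent p (⊥ : Ideal R) α := by
  rintro ⟨h0, h⟩
  refine h (α / 2) (by positivity) (by linarith) ?_
  have : ∀ c : ℝ, 0 < c → ∀ e : ℕ, (⊥ : Ideal R) ^ ⌈c * (p : ℝ) ^ e⌉₊ = ⊥ := by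
    intro c hc e
    have hp' : (0 : ℝ) < p := by exact_mod_cast hp
    rw [← Ideal.zero_eq_bot, zero_pow (Nat.ceil_pos.mpr (by positivity)).ne']
  simp only [testIdeal, this _ h0, this _ (half_pos h0)]

/-! ### Denominators of jumping exponents -/

/-- explicit bound on the denominators of F-jumping exponents
of an ideal in a polynomial ring. -/
theorem stmt17_jumping_exponent_denominators
    (p : ℕ) [Fact p.Prime] (k : Type*) [Field k] [CharP k p]
    (hk : (frobenius k p).Finite) (n m d e₀ N : ℕ)
    (a : Ideal (MvPolynomial (Fin n) k)) (g : Fin m → MvPolynomial (Fin n) k)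
    (hgen : a = Ideal.span (Set.range g)) (hdeg : ∀ i, (g i).totalDegree ≤ d)
    (he₀ : 1 ≤ e₀) (hp : m * d < p ^ e₀) (hN : N = (m * d + n).choose n)
    (α : ℝ) (hα : IsFJumpingExponent p a α) :
    ∃ s b : ℕ, s ≤ e₀ + N ∧ 1 ≤ b ∧ b ≤ N ∧
      ∃ kk : ℕ, ((p ^ s * (p ^ b - 1) : ℕ) : ℝ) * α = (kk : ℝ) := by
  classical
  have hpr : p.Prime := Fact.out
  subst hgen
  rcases Nat.eq_zero_or_pos m with rfl | hm
  · have : Ideal.span (Set.range g) = ⊥ := by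
      rw [Set.range_eq_empty, Ideal.span_empty]
    rw [this] at hα
    exact absurd hα (not_isFJumpingExponent_bot hpr.pos α)
  choose F hF using fun e => exists_polyCoords (n := n) hk e
  have hjump : ∀ i : ℕ, IsFJumpingExponent p (span (Set.range g)) ((p : ℝ) ^ i * α) := by
    intro i
    induction i with
    | zero => simpa using hα
    | succ i ih =>
      convert ih.prime_mul F using 1
      ring
  choose t ht htm using fun i =>
    (hjump i).exists_reduction F hm fun q r hr => span_range_pow_le g q r hr hm
  -- The reductions `p ^ i * α - t i` for `0 ≤ i ≤ N` are jumping exponents in `(0, m]`, and their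
  -- degree-bounded parts have dimension less than `N`, so two of the dimensions agree.
  obtain ⟨i, hi, j, hj, hij, heq⟩ := Finset.exists_ne_map_eq_of_card_lt_of_maps_to
    (s := Finset.range (N + 1)) (t := Finset.range N) (by simp)
    (f := fun i => Module.finrank k
      (degPart p m d (span (Set.range g)) ((p : ℝ) ^ i * α - t i)))
    (fun i _ => by
      simp only [Finset.coe_range, Set.mem_Iio]
      rw [hN]
      exact finrank_degPart_lt F (ht i))
  wlog hlt : i < j generalizing i j
  · exact this j hj i hi hij.symm heq.symm (by omega)
  have hβ : (p : ℝ) ^ i * α - t i = (p : ℝ) ^ j * α - t j := by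
    rcases lt_trichotomy ((p : ℝ) ^ i * α - t i) ((p : ℝ) ^ j * α - t j) with h | h | h
    · exact absurd heq
        (finrank_degPart_strictAnti F hF g hdeg (ht i) (ht j) (htm j) h).ne'
    · exact h
    · exact absurd heq
        (finrank_degPart_strictAnti F hF g hdeg (ht j) (ht i) (htm i) h).ne
  rw [Finset.mem_range] at hi hj
  have hone : 1 ≤ p ^ (j - i) := Nat.one_le_pow _ _ hpr.pos
  have hval : ((p ^ i * (p ^ (j - i) - 1) : ℕ) : ℝ) * α = (t j : ℝ) - t i := by
    have h1 : (p : ℝ) ^ j = p ^ i * p ^ (j - i) := by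
      rw [← pow_add, Nat.add_sub_cancel' hlt.le]
    push_cast [hone]
    rw [h1] at hβ
    linarith
  have hle : t i ≤ t j := by
    have h2 : (0 : ℝ) ≤ (t j : ℝ) - t i := hval ▸ mul_nonneg (Nat.cast_nonneg _) hα.1.le
    exact_mod_cast sub_nonneg.mp h2
  exact ⟨i, j - i, by omega, by omega, by omega, t j - t i, by rw [hval, Nat.cast_sub hle]⟩
end

section
/- (Rationality of F-jumping exponents.) Let k be a field of prime characteristic p and let R be a commutative Noetherian k-algebra that is essentially of finite type over k and whose Frobenius endomorphism is finite and flat (equivalently, R is regular, F-finite, and essentially of finite type over k). Then for every ideal a of R, every F-jumping exponent of a is a rational number. -/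
/-!
The set of jumping exponents of `a` is stable under `α ↦ p α`, because `τ(a^{pc})^{[1/p]} = τ(a^c)`
(`root_testIdeal`), and under `α ↦ α - 1` as long as `α` exceeds the number of generators of `a`
plus one, by Skoda's theorem `τ(a^c) = a τ(a^{c-1})` (`testIdeal_skoda`). So for every `e` some
`p^e α - m_e` with `m_e` a natural number is a jumping exponent in a fixed bounded interval. Distinct
jumping exponents have distinct test ideals, and only finitely many ideals `τ(a^c)` have `c` in a
bounded interval (`finite_testIdeal`). Hence `p^e α - m_e = p^{e'} α - m_{e'}` for some `e ≠ e'`,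
which makes `α` rational.

For the finiteness, Frobenius being finite and flat gives a dual basis of `R` over itself
(`FrobeniusDual`), and `b^{[1/p]}` is generated by the coordinates of the elements of `b`. Let `s` be
a finite set such that `R` is a localization of `k[s]`, and say that an element has degree at most
`n` when it lies in `W ^ n`, where `W` is the `k`-span of `s` and `1 ∈ s`. After multiplying the
dual basis by a unit its coordinate maps divide degrees by `p` up to a constant `K`
(`FrobeniusDual.exists_gauge`), so for `c ≤ r` the ideal `a^{⌈c p^e⌉}`, generated in degree at most
`r p^e`, has a `p^e`-th root generated in degree at most `r + 2 K`, independently of `e`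
(`FrobeniusDual.isGenIn_iterate_root`). A chain of ideals generated inside one finite-dimensional
space is finite. The rescaling step needs `k` to be F-finite; this follows from the F-finiteness of
a residue field of `R` (`frobenius_finite_base`).
-/


open Ideal

/-! ### Frobenius roots through a dual basis -/

/-- A finite flat module over a Noetherian ring is projective, hence a direct summand of some `Aⁿ`;
the summand inclusion and projection give the dual basis. -/
theorem exists_frobeniusDual_aux {A B : Type*} [CommRing A] [CommRing B] [IsNoetherianRing A]
    (f : A →+* B) (hfin : f.Finite) (hflat : f.Flat) :
    ∃ (n : ℕ) (e : Fin n → B) (φ : Fin n → B →+ A),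
      (∀ i r x, φ i (f r * x) = r * φ i x) ∧ ∀ x, x = ∑ i, f (φ i x) * e i := by
  algebraize [f]
  have : Module.FinitePresentation A B := Module.finitePresentation_of_finite A B
  have : Module.Projective A B := Module.Flat.projective_of_finitePresentation
  obtain ⟨n, F, G, -, -, hFG⟩ := Module.Finite.exists_comp_eq_id_of_projective A B
  refine ⟨n, fun i => F (Pi.single i 1), fun i => ((LinearMap.proj i).comp G).toAddMonoidHom,
    fun i r x => ?_, fun x => ?_⟩
  · change G (r • x) i = r * G x i
    simp
  · have h1 : F (G x) = x := LinearMap.congr_fun hFG x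
    conv_lhs => rw [← h1, ← Finset.univ_sum_single (G x), map_sum]
    refine Finset.sum_congr rfl fun i _ => ?_
    change _ = G x i • F (Pi.single i 1)
    rw [← map_smul, ← Pi.single_smul, smul_eq_mul, mul_one]

/-- A finite dual basis of `R`, viewed as a module over itself through Frobenius: elements `e i`
and additive maps `φ i` which are `p⁻¹`-linear, i.e. `φ i (r ^ p * x) = r * φ i x`, such that
every `x` equals `∑ i, (φ i x) ^ p * e i`. -/
structure FrobeniusDual (R : Type*) [CommRing R] (p : ℕ) where
  /-- the number of basis elements -/
  n : ℕ
  /-- the elements of the dual basis -/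
  e : Fin n → R
  /-- the coordinate maps of the dual basis -/
  φ : Fin n → R →+ R
  φ_pow_mul : ∀ i r x, φ i (r ^ p * x) = r * φ i x
  eq_sum : ∀ x, x = ∑ i, φ i x ^ p * e i

theorem exists_frobeniusDual {R : Type*} [CommRing R] [IsNoetherianRing R] (p : ℕ) [Fact p.Prime]
    [CharP R p] (hfin : (frobenius R p).Finite) (hflat : (frobenius R p).Flat) :
    Nonempty (FrobeniusDual R p) := by
  obtain ⟨n, e, φ, h1, h2⟩ := exists_frobeniusDual_aux _ hfin hflat
  exact ⟨⟨n, e, φ, h1, h2⟩⟩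

theorem bracketPow_eq_map {R : Type*} [CommRing R] (p : ℕ) [Fact p.Prime] [CharP R p]
    (J : Ideal R) (e : ℕ) : bracketPow J (p ^ e) = J.map (iterateFrobenius R p e) := rfl

namespace FrobeniusDual

variable {R : Type*} [CommRing R] {p : ℕ} (D : FrobeniusDual R p)

/-- The ideal `b^{[1/p]}`, generated by all coordinates of all elements of `b` with respect to the
dual basis. -/
def root (b : Ideal R) : Ideal R := Ideal.span {y | ∃ i, ∃ x ∈ b, y = D.φ i x}

theorem φ_mem_root {b : Ideal R} {x : R} (hx : x ∈ b) (i : Fin D.n) : D.φ i x ∈ D.root b :=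
  Ideal.subset_span ⟨i, x, hx, rfl⟩

variable [Fact p.Prime] [CharP R p]

/-- The defining property of `b^{[1/p]}`: it is contained in `J` if and only if `b` is contained
in `J^{[p]}`. -/
theorem gc_root : GaloisConnection D.root (Ideal.map (frobenius R p)) := by
  intro b J
  constructor
  · intro h x hx
    rw [D.eq_sum x]
    exact Ideal.sum_mem _ fun i _ => Ideal.mul_mem_right _ _
      (Ideal.mem_map_of_mem (frobenius R p) (h (D.φ_mem_root hx i)))
  · intro h
    refine Ideal.span_le.2 ?_
    rintro _ ⟨i, x, hx, rfl⟩
    have key : ∀ y ∈ Ideal.map (frobenius R p) J, ∀ r, D.φ i (r * y) ∈ J := by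
      intro y hy
      refine Submodule.span_induction ?_ ?_ ?_ ?_ hy
      · rintro _ ⟨t, ht, rfl⟩ r
        rw [frobenius_def, mul_comm, D.φ_pow_mul]
        exact J.mul_mem_right _ ht
      · intro r; simp
      · intro y z _ _ hy hz r
        rw [mul_add, map_add]
        exact J.add_mem (hy r) (hz r)
      · intro c y _ hy r
        rw [smul_eq_mul, ← mul_assoc]
        exact hy _
    simpa using key x (h hx) 1

theorem gc_root_iterate (e : ℕ) :
    GaloisConnection (D.root^[e]) (Ideal.map (iterateFrobenius R p e)) := by
  induction e with
  | zero =>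
    intro b J
    have : iterateFrobenius R p 0 = RingHom.id R := by ext; simp
    simp [this]
  | succ e ih =>
    intro b J
    have : iterateFrobenius R p (e + 1) = (frobenius R p).comp (iterateFrobenius R p e) := by
      ext x; simp [iterateFrobenius_def, frobenius_def, pow_succ, pow_mul]
    rw [Function.iterate_succ_apply, ih _ _, D.gc_root _ _, this, Ideal.map_map]

/-- The smallest ideal `J` with `b ≤ J^{[p^e]}` is computed by iterating `root`, since lower adjoints
compose. -/
theorem frobRoot_eq (b : Ideal R) (e : ℕ) : frobRoot b (p ^ e) = D.root^[e] b := by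
  refine le_antisymm (sInf_le ?_) (le_sInf fun J hJ => ?_)
  · exact (D.gc_root_iterate e).le_u_l b
  · exact (D.gc_root_iterate e).l_le hJ

theorem root_mono : Monotone D.root := D.gc_root.monotone_l

theorem root_top : D.root ⊤ = ⊤ := by
  rw [← top_le_iff]
  refine (D.gc_root.le_u_l ⊤).trans (Ideal.map_le_iff_le_comap.2 fun x hx => ?_)
  exact Ideal.pow_mem_of_mem _ hx p (Fact.out : p.Prime).pos

/-- The projection formula `(a^{[p]} b)^{[1/p]} = a b^{[1/p]}`. -/
theorem root_map_mul (a b : Ideal R) :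
    D.root (a.map (frobenius R p) * b) = a * D.root b := by
  refine le_antisymm ?_ ?_
  · rw [D.gc_root _ _, Ideal.map_mul]
    exact Ideal.mul_mono_right (D.gc_root.le_u_l b)
  · refine Ideal.mul_le.2 fun r hr y hy => ?_
    refine Submodule.span_induction ?_ (by simp) ?_ ?_ hy
    · rintro _ ⟨i, x, hx, rfl⟩
      rw [← D.φ_pow_mul]
      exact D.φ_mem_root (Ideal.mul_mem_mul (Ideal.mem_map_of_mem (frobenius R p) hr) hx) i
    · intro x y _ _ hx hy
      rw [mul_add]; exact add_mem hx hy
    · intro c x _ hx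
      rw [smul_eq_mul, mul_left_comm]
      exact Ideal.mul_mem_left _ _ hx

theorem iterate_root_map_mul (e : ℕ) (a b : Ideal R) :
    D.root^[e] (a.map (iterateFrobenius R p e) * b) = a * D.root^[e] b := by
  induction e generalizing b with
  | zero =>
    have : iterateFrobenius R p 0 = RingHom.id R := by ext; simp
    simp [this]
  | succ e ih =>
    have : iterateFrobenius R p (e + 1) = (frobenius R p).comp (iterateFrobenius R p e) := by
      ext x; simp [iterateFrobenius_def, frobenius_def, pow_succ, pow_mul]
    rw [Function.iterate_succ_apply, Function.iterate_succ_apply, this, ← Ideal.map_map,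
      D.root_map_mul, ih]

/-- Since `(a^m)^{[p]} ≤ a^{pm}`, the ideals `(a^{⌈c p^e⌉})^{[1/p^e]}` increase with `e`. -/
theorem pow_le_root_pow (a : Ideal R) {m n : ℕ} (h : n ≤ p * m) : a ^ m ≤ D.root (a ^ n) := by
  calc a ^ m = D.root ((a ^ m).map (frobenius R p)) := by
        have := D.root_map_mul (a ^ m) ⊤
        rwa [D.root_top, Ideal.mul_top, Ideal.mul_top, eq_comm] at this
    _ ≤ D.root (a ^ n) := by
        refine D.root_mono (Ideal.map_le_iff_le_comap.2 fun x hx => ?_)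
        change x ^ p ∈ a ^ n
        refine Ideal.pow_le_pow_right h ?_
        rw [mul_comm, pow_mul]
        exact Ideal.pow_mem_pow hx p

end FrobeniusDual

/-- Pigeonhole: a product of more than `#s * (q - 1)` elements of `s` contains some element of `s`
to the power `q`. -/
theorem span_pow_le_span_pow_mul {k R : Type*} [CommRing k] [CommRing R] [Algebra k R]
    (s : Finset R) {n q : ℕ} (hn : s.card * (q - 1) < n) :
    Submodule.span k (s : Set R) ^ n ≤
      Submodule.span k {z | ∃ y ∈ s, ∃ w ∈ Submodule.span k (s : Set R) ^ (n - q), z = y ^ q * w} := by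
  classical
  conv_lhs => rw [Submodule.span_pow]
  refine Submodule.span_mono fun x hx => ?_
  obtain ⟨f, hf, rfl⟩ := Set.mem_pow_iff_prod.1 hx
  obtain ⟨y, hy, hcard⟩ := Finset.exists_lt_card_fiber_of_mul_lt_card_of_maps_to
    (s := (Finset.univ : Finset (Fin n))) (t := s) (f := f) (n := q - 1)
    (fun i _ => hf i) (by simpa using hn)
  obtain ⟨T, hT, hTq⟩ := Finset.exists_subset_card_eq (show q ≤ _ from Nat.le_of_pred_lt hcard)
  have hmem : ∀ U : Finset (Fin n), ∏ i ∈ U, f i ∈ Submodule.span k (s : Set R) ^ U.card := by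
    intro U
    induction U using Finset.induction_on with
    | empty => simp [Submodule.one_le.1 le_rfl]
    | insert a U ha ih =>
      rw [Finset.prod_insert ha, Finset.card_insert_of_notMem ha, pow_succ']
      exact Submodule.mul_mem_mul (Submodule.subset_span (hf a)) ih
  refine ⟨y, hy, ∏ i ∈ Finset.univ \ T, f i, ?_, ?_⟩
  · have := hmem (Finset.univ \ T)
    rwa [Finset.card_sdiff_of_subset (Finset.subset_univ T), hTq, Finset.card_fin] at this
  · rw [← Finset.prod_sdiff (Finset.subset_univ T), mul_comm]
    congr 1
    rw [← hTq]
    exact Finset.prod_eq_pow_card fun i hi => (Finset.mem_filter.1 (hT hi)).2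

/-! ### The base field is F-finite -/

theorem RingHom.Finite.of_comp_of_injective {A B C : Type*} [CommRing A] [CommRing B] [CommRing C]
    [IsNoetherianRing A] (f : A →+* B) (g : B →+* C) (hg : Function.Injective g)
    (h : (g.comp f).Finite) : f.Finite := by
  algebraize [f, g, g.comp f]
  exact Module.Finite.of_injective (IsScalarTower.toAlgHom A B C).toLinearMap hg

/-- Finiteness of `f : k → l` follows from finiteness of an extension `h : E → F` compatible with a
map `g` on polynomial rings, where `E` is the fraction field of `k[σ]`, `g` acts on coefficients
through `f` and multiplies exponents by `p`. Indeed a `k`-basis of `l` stays linearly independent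
over `E`: compare coefficients at the exponents `p • w`. -/
theorem finite_of_finite_fractionField {σ k l E F : Type*} [Field k] [Field l] [Field E] [Field F]
    (p : ℕ) (f : k →+* l) (g : MvPolynomial σ k →+* MvPolynomial σ l)
    (hg : ∀ (P : MvPolynomial σ k) (w : σ →₀ ℕ), (g P).coeff (p • w) = f (P.coeff w))
    (h : E →+* F) [Algebra (MvPolynomial σ k) E] [IsFractionRing (MvPolynomial σ k) E]
    (j : MvPolynomial σ l →+* F) (hj : Function.Injective j)
    (comm : h.comp (algebraMap (MvPolynomial σ k) E) = j.comp g) (hh : h.Finite) : f.Finite := by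
  let := f.toAlgebra
  let := h.toAlgebra
  let : Algebra (MvPolynomial σ k) F := (h.comp (algebraMap (MvPolynomial σ k) E)).toAlgebra
  have : IsScalarTower (MvPolynomial σ k) E F := .of_algebraMap_eq fun _ => rfl
  have : Module.Finite E F := hh
  let b := Module.Basis.ofVectorSpace k l
  have hli : LinearIndependent (MvPolynomial σ k) fun i => j (MvPolynomial.C (b i)) := by
    rw [linearIndependent_iff']
    intro s c hc i hi
    have h1 : j (∑ i ∈ s, g (c i) * MvPolynomial.C (b i)) = 0 := by
      rw [← hc, map_sum]
      refine Finset.sum_congr rfl fun i _ => ?_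
      rw [Algebra.smul_def, map_mul]
      congr 1
      exact (RingHom.congr_fun comm (c i)).symm
    have h2 := (injective_iff_map_eq_zero j).1 hj _ h1
    ext w
    have h3 : ∑ i ∈ s, (c i).coeff w • b i = 0 := by
      have := congrArg (MvPolynomial.coeff (p • w)) h2
      simp only [MvPolynomial.coeff_sum, mul_comm (g _), MvPolynomial.coeff_C_mul, hg,
        MvPolynomial.coeff_zero] at this
      rw [← this]
      exact Finset.sum_congr rfl fun i _ => by rw [Algebra.smul_def, mul_comm]; rfl
    simpa using linearIndependent_iff'.1 b.linearIndependent s _ h3 i hi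
  have hli' := hli.localization E (nonZeroDivisors _)
  have := hli'.finite
  exact Module.Finite.of_basis b

open scoped IntermediateField.algebraAdjoinAdjoin in
/-- Finiteness of Frobenius descends along a finitely generated field extension `K / k`. For a
transcendence basis `x`, the extension `K / k(x)` is finite, so Frobenius of `k(x)` is finite as a
submodule of a finite module; the purely transcendental case is `finite_of_finite_fractionField`. -/
theorem frobenius_finite_of_field {k K : Type*} (p : ℕ) [Fact p.Prime] [Field k] [CharP k p]
    [Field K] [CharP K p] [Algebra k K] [Algebra.EssFiniteType k K]
    (hK : (frobenius K p).Finite) : (frobenius k p).Finite := by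
  obtain ⟨ι, x, hx⟩ := exists_isTranscendenceBasis' k K
  let E := IntermediateField.adjoin k (Set.range x)
  have : CharP E p := charP_of_injective_algebraMap (algebraMap k E).injective p
  have : Algebra.EssFiniteType E K := .of_comp k E K
  have : Algebra.IsAlgebraic E K := hx.isAlgebraic_field
  have : Module.Finite E K := Algebra.finite_of_essFiniteType_of_isAlgebraic
  have hE : (frobenius E p).Finite := by
    refine .of_comp_of_injective _ (algebraMap E K) (algebraMap E K).injective ?_
    have : (algebraMap E K).comp (frobenius E p) = (frobenius K p).comp (algebraMap E K) := by
      ext; simp [frobenius_def]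
    rw [this]
    exact hK.comp (RingHom.finite_algebraMap.2 inferInstance)
  let e := hx.1.aevalEquiv
  let : Algebra (MvPolynomial ι k) E :=
    ((algebraMap (Algebra.adjoin k (Set.range x)) E).comp e.toRingHom).toAlgebra
  have : IsFractionRing (MvPolynomial ι k) E :=
    .of_ringEquiv_left e.toRingEquiv fun _ => rfl
  refine finite_of_finite_fractionField p (frobenius k p) (frobenius (MvPolynomial ι k) p) ?_
    (frobenius E p) (algebraMap _ E) (IsFractionRing.injective _ _) ?_ hE
  · intro P w
    rw [frobenius_def, ← MvPolynomial.map_frobenius_expand, MvPolynomial.coeff_map,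
      MvPolynomial.coeff_expand_smul _ (Fact.out : p.Prime).ne_zero]
  · ext <;> simp [frobenius_def]

/-- If a nonzero algebra essentially of finite type over `k` is `F`-finite, then so is `k`: pass to
a residue field. -/
theorem frobenius_finite_base {k R : Type*} (p : ℕ) [Fact p.Prime] [Field k] [CharP k p]
    [CommRing R] [Nontrivial R] [CharP R p] [Algebra k R] [Algebra.EssFiniteType k R]
    (hR : (frobenius R p).Finite) : (frobenius k p).Finite := by
  obtain ⟨m, hm⟩ := Ideal.exists_maximal R
  let := Ideal.Quotient.field m
  have : CharP (R ⧸ m) p := charP_of_injective_algebraMap (algebraMap k (R ⧸ m)).injective p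
  refine frobenius_finite_of_field (K := R ⧸ m) p (RingHom.Finite.of_comp_finite
    (f := Ideal.Quotient.mk m) ?_)
  have : (frobenius (R ⧸ m) p).comp (Ideal.Quotient.mk m) =
      (Ideal.Quotient.mk m).comp (frobenius R p) := by
    ext; simp [frobenius_def]
  rw [this]
  exact (RingHom.Finite.of_surjective _ Ideal.Quotient.mk_surjective).comp hR

/-! ### Degrees of ideal generators -/

/-- An ideal `b` generated by its elements lying in the `k`-subspace `V`. -/
def IsGenIn {k R : Type*} [CommRing k] [CommRing R] [Algebra k R] (V : Submodule k R)
    (b : Ideal R) : Prop :=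
  b ≤ Ideal.span ((b : Set R) ∩ V)

theorem IsGenIn.mono {k R : Type*} [CommRing k] [CommRing R] [Algebra k R] {V V' : Submodule k R}
    (h : V ≤ V') {b : Ideal R} (hb : IsGenIn V b) : IsGenIn V' b :=
  le_trans hb (Ideal.span_mono (Set.inter_subset_inter_right _ h))

/-- A chain of ideals that are all generated inside one finite-dimensional subspace is finite:
such an ideal is determined by the dimension of its trace on the subspace. -/
theorem finite_of_isGenIn {k R : Type*} [Field k] [CommRing R] [Algebra k R] (V : Submodule k R)
    [Module.Finite k V] (S : Set (Ideal R)) (hchain : ∀ I ∈ S, ∀ J ∈ S, I ≤ J ∨ J ≤ I)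
    (hS : ∀ I ∈ S, IsGenIn V I) : S.Finite := by
  let d : Ideal R → ℕ := fun I => Module.finrank k ↥(I.restrictScalars k ⊓ V)
  have key : ∀ I ∈ S, ∀ J ∈ S, I ≤ J → d I = d J → I = J := by
    intro I hI J hJ hIJ hd
    have : Module.Finite k ↥(J.restrictScalars k ⊓ V) :=
      Submodule.finiteDimensional_inf_right _ _
    have h1 : I.restrictScalars k ⊓ V = J.restrictScalars k ⊓ V :=
      Submodule.eq_of_le_of_finrank_eq (inf_le_inf_right _ hIJ) hd
    refine le_antisymm hIJ ((hS J hJ).trans (Ideal.span_le.2 fun x hx => ?_))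
    have hx' : x ∈ J.restrictScalars k ⊓ V := hx
    rw [← h1] at hx'
    exact hx'.1
  refine Set.Finite.of_injOn (f := d) (t := Set.Iic (Module.finrank k V)) ?_ ?_ (Set.finite_Iic _)
  · intro I _
    exact Submodule.finrank_mono inf_le_right
  · intro I hI J hJ hd
    rcases hchain I hI J hJ with h | h
    · exact key I hI J hJ h hd
    · exact (key J hJ I hI h hd.symm).symm

/-- A finite ring map `f` exhibits `B` as the set of sums of `f d * b` with `b` in a finite set. The
additive formulation avoids a second module structure when `f` is a Frobenius endomorphism. -/
theorem exists_finset_mem_closure_of_finite {A B : Type*} [CommRing A] [CommRing B] (f : A →+* B)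
    (hf : f.Finite) : ∃ S : Finset B, ∀ c : B,
      c ∈ AddSubmonoid.closure {z : B | ∃ d : A, ∃ b ∈ S, z = f d * b} := by
  algebraize [f]
  obtain ⟨S, hS⟩ := Module.Finite.fg_top (R := A) (M := B)
  refine ⟨S, fun c => ?_⟩
  have hc : c ∈ Submodule.span A (S : Set B) := by rw [hS]; trivial
  have key : ∀ a : A, f a * c ∈ AddSubmonoid.closure {z : B | ∃ d : A, ∃ b ∈ S, z = f d * b} := by
    induction hc using Submodule.span_induction with
    | mem x hx => exact fun a => AddSubmonoid.subset_closure ⟨a, x, hx, rfl⟩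
    | zero => simp
    | add x y _ _ hx hy => intro a; rw [mul_add]; exact add_mem (hx a) (hy a)
    | smul d x _ hx =>
      intro a
      have := hx (a * d)
      rwa [map_mul, mul_assoc] at this
  simpa using key 1

section Gauge

variable {k R : Type*} [Field k] [CommRing R] [Algebra k R]

theorem span_pow_mono {W : Submodule k R} (h1 : (1 : R) ∈ W) {m n : ℕ} (h : m ≤ n) :
    W ^ m ≤ W ^ n := pow_le_pow_right' (Submodule.one_le.2 h1) h

theorem exists_mem_pow_of_mem_adjoin {s : Finset R} (h1 : (1 : R) ∈ s) {x : R}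
    (hx : x ∈ Algebra.adjoin k (s : Set R)) : ∃ n, x ∈ Submodule.span k (s : Set R) ^ n := by
  have h1' : (1 : R) ∈ Submodule.span k (s : Set R) := Submodule.subset_span h1
  induction hx using Algebra.adjoin_induction with
  | mem x hx => exact ⟨1, by simpa using Submodule.subset_span hx⟩
  | algebraMap r => exact ⟨0, by simp [Submodule.mem_one]⟩
  | add x y _ _ hx hy =>
    obtain ⟨m, hm⟩ := hx
    obtain ⟨n, hn⟩ := hy
    exact ⟨m + n, add_mem (span_pow_mono h1' (by omega) hm) (span_pow_mono h1' (by omega) hn)⟩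
  | mul x y _ _ hx hy =>
    obtain ⟨m, hm⟩ := hx
    obtain ⟨n, hn⟩ := hy
    exact ⟨m + n, by rw [pow_add]; exact Submodule.mul_mem_mul hm hn⟩

/-- Common denominators for finitely many elements of a localization of `A`. -/
theorem exists_unit_mul_mem {A : Subalgebra k R} (hloc : ∀ r : R, ∃ t ∈ A, IsUnit t ∧ r * t ∈ A)
    {U : Set R} (hU : U.Finite) : ∃ t ∈ A, IsUnit t ∧ ∀ r ∈ U, t * r ∈ A := by
  induction U, hU using Set.Finite.induction_on with
  | empty => exact ⟨1, A.one_mem, isUnit_one, by simp⟩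
  | @insert a U _ _ ih =>
    obtain ⟨t, ht, hu, h⟩ := ih
    obtain ⟨t', ht', hu', h'⟩ := hloc a
    refine ⟨t * t', A.mul_mem ht ht', hu.mul hu', ?_⟩
    rintro r (rfl | hr)
    · rw [mul_assoc, mul_comm t']; exact A.mul_mem ht h'
    · rw [mul_right_comm]; exact A.mul_mem (h r hr) ht'

variable {p : ℕ} [Fact p.Prime]

/-- Peeling off `p`-th powers of generators by the pigeonhole principle, every element of a
localization of `k[s]` is a sum of multiples, by `p`-th powers of `R`, of elements of bounded
degree. -/
theorem mem_closure_pow_mul {s : Finset R} (h1 : (1 : R) ∈ s)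
    (hloc : ∀ r : R, ∃ t ∈ Algebra.adjoin k (s : Set R),
      IsUnit t ∧ r * t ∈ Algebra.adjoin k (s : Set R)) (r : R) :
    r ∈ AddSubmonoid.closure
      {z : R | ∃ y : R, ∃ w ∈ Submodule.span k (s : Set R) ^ (s.card * p), z = y ^ p * w} := by
  have hp : 0 < p := (Fact.out : p.Prime).pos
  have h1' : (1 : R) ∈ Submodule.span k (s : Set R) := Submodule.subset_span h1
  set C := AddSubmonoid.closure
      {z : R | ∃ y : R, ∃ w ∈ Submodule.span k (s : Set R) ^ (s.card * p), z = y ^ p * w} with hC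
  have hmul : ∀ (y : R), ∀ x ∈ C, y ^ p * x ∈ C := by
    intro y x hx
    induction hx using AddSubmonoid.closure_induction with
    | mem x hx =>
      obtain ⟨y', w, hw, rfl⟩ := hx
      exact AddSubmonoid.subset_closure ⟨y * y', w, hw, by ring⟩
    | zero => simp
    | add x z _ _ hx hz => rw [mul_add]; exact add_mem hx hz
  have hW : ∀ n, ∀ x ∈ Submodule.span k (s : Set R) ^ n, x ∈ C := by
    intro n
    induction n using Nat.strong_induction_on with
    | _ n ih =>
      intro x hx
      by_cases hn : n ≤ s.card * p
      · exact AddSubmonoid.subset_closure ⟨1, x, span_pow_mono h1' hn hx, by simp⟩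
      · have hle : s.card * (p - 1) ≤ s.card * p := Nat.mul_le_mul_left _ (Nat.sub_le _ _)
        have := span_pow_le_span_pow_mul (k := k) s (n := n) (q := p) (by omega) hx
        clear hx
        have key : ∀ c : k, c • x ∈ C := by
          induction this using Submodule.span_induction with
          | mem x hx =>
            intro c
            obtain ⟨y, _, w, hw, rfl⟩ := hx
            rw [← mul_smul_comm]
            exact hmul _ _ (ih _ (by omega) _ (Submodule.smul_mem _ c hw))
          | zero => intro c; simp
          | add x y _ _ hx hy => intro c; rw [smul_add]; exact add_mem (hx c) (hy c)
          | smul a x _ hx => intro c; rw [smul_smul]; exact hx _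
        simpa using key 1
  obtain ⟨t, ht, hu, hrt⟩ := hloc r
  obtain ⟨u, rfl⟩ := hu
  obtain ⟨n, hn⟩ := exists_mem_pow_of_mem_adjoin h1
    (Subalgebra.mul_mem _ hrt (Subalgebra.pow_mem _ ht (p - 1)))
  -- `r = (1 / u) ^ p * (r * u ^ p)`
  have := hmul (↑u⁻¹ : R) _ (hW n _ hn)
  convert this using 1
  rw [mul_assoc, ← pow_succ', Nat.sub_add_cancel hp, mul_left_comm, ← mul_pow]
  simp

/-- Over an `F`-finite field, a finitely generated subspace is spanned by finitely many elements even
when the coefficients are restricted to `p`-th powers. -/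
theorem exists_finite_frobenius_span [CharP k p] (hk : (frobenius k p).Finite) {V : Submodule k R}
    (hV : V.FG) : ∃ U : Set R, U.Finite ∧ ∀ x ∈ V,
      x ∈ AddSubmonoid.closure {z : R | ∃ c : k, ∃ u ∈ U, z = (c ^ p) • u} := by
  classical
  obtain ⟨T, rfl⟩ := hV
  obtain ⟨B, hB⟩ := exists_finset_mem_closure_of_finite (frobenius k p) hk
  simp only [frobenius_def] at hB
  refine ⟨Set.image2 (fun b t => b • t) (B : Set k) (T : Set R),
    Set.Finite.image2 _ B.finite_toSet T.finite_toSet, fun x hx => ?_⟩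
  have key : ∀ c : k, c • x ∈ AddSubmonoid.closure {z : R | ∃ c : k, ∃ u ∈
      Set.image2 (fun b t => b • t) (B : Set k) (T : Set R), z = (c ^ p) • u} := by
    induction hx using Submodule.span_induction with
    | mem x hx =>
      intro c
      have hc := hB c
      induction hc using AddSubmonoid.closure_induction with
      | mem c hc =>
        obtain ⟨d, b, hb, rfl⟩ := hc
        exact AddSubmonoid.subset_closure ⟨d, b • x, ⟨b, hb, x, hx, rfl⟩, mul_smul _ _ _⟩
      | zero => simp
      | add c d _ _ hc hd => rw [add_smul]; exact add_mem hc hd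
    | zero => intro c; simp
    | add x y _ _ hx hy => intro c; rw [smul_add]; exact add_mem (hx c) (hy c)
    | smul a x _ hx => intro c; rw [smul_smul]; exact hx _
  simpa using key 1

end Gauge

namespace FrobeniusDual

variable {k R : Type*} [Field k] [CommRing R] [Algebra k R] {p : ℕ}

/-- Multiplying all coordinate maps of a dual basis by a unit yields another dual basis. -/
def rescale (D : FrobeniusDual R p) (u : Rˣ) : FrobeniusDual R p where
  n := D.n
  e i := (↑u⁻¹ : R) ^ p * D.e i
  φ i := (AddMonoidHom.mulLeft (u : R)).comp (D.φ i)
  φ_pow_mul i r x := by simp [D.φ_pow_mul, mul_left_comm]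
  eq_sum x := by
    conv_lhs => rw [D.eq_sum x]
    refine Finset.sum_congr rfl fun i _ => ?_
    simp only [AddMonoidHom.comp_apply, AddMonoidHom.coe_mulLeft]
    rw [mul_pow, mul_mul_mul_comm, mul_comm, mul_assoc, ← mul_assoc (_ ^ p) (_ ^ p), ← mul_pow]
    simp

variable [Fact p.Prime]

/-- Over an `F`-finite base field, a dual basis can be rescaled so that its coordinate maps divide
degrees by `p`, up to an additive constant. -/
theorem exists_gauge [CharP k p] (D₀ : FrobeniusDual R p) (hk : (frobenius k p).Finite)
    {s : Finset R} (h1 : (1 : R) ∈ s)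
    (hloc : ∀ r : R, ∃ t ∈ Algebra.adjoin k (s : Set R),
      IsUnit t ∧ r * t ∈ Algebra.adjoin k (s : Set R)) :
    ∃ (D : FrobeniusDual R p) (K : ℕ), ∀ (i : Fin D.n) (m : ℕ),
      ∀ x ∈ Submodule.span k (s : Set R) ^ (s.card * p + p * m),
        D.φ i x ∈ Submodule.span k (s : Set R) ^ (K + m) := by
  classical
  have hp : 0 < p := (Fact.out : p.Prime).pos
  have h1' : (1 : R) ∈ Submodule.span k (s : Set R) := Submodule.subset_span h1
  set W := Submodule.span k (s : Set R) with hWdef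
  obtain ⟨U, hU, hWU⟩ := exists_finite_frobenius_span hk
    ((Submodule.fg_span s.finite_toSet : W.FG).pow (s.card * p))
  -- clear the denominators of the finitely many values of the coordinate maps on `U`
  obtain ⟨t, ht, ⟨v, rfl⟩, htU⟩ := exists_unit_mul_mem hloc
    (Set.finite_iUnion fun i : Fin D₀.n => hU.image (D₀.φ i))
  let D := D₀.rescale v
  obtain ⟨K, hK⟩ : ∃ K, ∀ (i : Fin D.n), ∀ u ∈ U, D.φ i u ∈ W ^ K := by
    have hdeg : ∀ i : Fin D₀.n, ∀ u ∈ U, ∃ n, (v : R) * D₀.φ i u ∈ W ^ n := fun i u hu =>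
      exists_mem_pow_of_mem_adjoin h1 (htU _ (Set.mem_iUnion.2 ⟨i, u, hu, rfl⟩))
    choose! n hn using hdeg
    refine ⟨∑ i, ∑ u ∈ hU.toFinset, n i u, fun i u hu => span_pow_mono h1' ?_ (hn i u hu)⟩
    calc n i u ≤ ∑ u ∈ hU.toFinset, n i u :=
          Finset.single_le_sum (f := n i) (fun _ _ => Nat.zero_le _) (hU.mem_toFinset.2 hu)
      _ ≤ _ := Finset.single_le_sum (f := fun i => ∑ u ∈ hU.toFinset, n i u)
          (fun _ _ => Nat.zero_le _) (Finset.mem_univ i)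
  refine ⟨D, K, fun i m => ?_⟩
  have hsmul : ∀ (c : k) (x : R), D.φ i ((c ^ p) • x) = c • D.φ i x := by
    intro c x
    rw [Algebra.smul_def, map_pow, D.φ_pow_mul, Algebra.smul_def]
  induction m with
  | zero =>
    intro x hx
    simp only [mul_zero, add_zero] at hx ⊢
    have hx' := hWU x hx
    clear hx
    induction hx' using AddSubmonoid.closure_induction with
    | mem x hx =>
      obtain ⟨c, u, hu, rfl⟩ := hx
      rw [hsmul]
      exact Submodule.smul_mem _ _ (hK i u hu)
    | zero => simp
    | add x y _ _ hx hy => rw [map_add]; exact add_mem hx hy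
  | succ m ih =>
    intro x hx
    have hle : s.card * (p - 1) ≤ s.card * p := Nat.mul_le_mul_left _ (Nat.sub_le _ _)
    have hx' := span_pow_le_span_pow_mul (k := k) s (q := p) (by rw [mul_add]; omega) hx
    have hsub : s.card * p + p * (m + 1) - p = s.card * p + p * m := by rw [mul_add]; omega
    rw [hsub] at hx'
    clear hx
    have key : ∀ c : k, D.φ i (c • x) ∈ W ^ (K + (m + 1)) := by
      induction hx' using Submodule.span_induction with
      | mem x hx =>
        intro c
        obtain ⟨y, hy, w, hw, rfl⟩ := hx
        rw [← mul_smul_comm, D.φ_pow_mul, ← add_assoc, pow_succ']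
        exact Submodule.mul_mem_mul (Submodule.subset_span hy) (ih _ (Submodule.smul_mem _ c hw))
      | zero => intro c; simp
      | add x y _ _ hx hy => intro c; rw [smul_add, map_add]; exact add_mem (hx c) (hy c)
      | smul a x _ hx => intro c; rw [smul_smul]; exact hx _
    simpa using key 1

/-- If the coordinate maps divide degrees by `p` up to a constant `K`, then so does `b ↦ b^{[1/p]}`
on degrees of ideal generators. -/
theorem isGenIn_root (D : FrobeniusDual R p) {s : Finset R} (h1 : (1 : R) ∈ s)
    (hloc : ∀ r : R, ∃ t ∈ Algebra.adjoin k (s : Set R),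
      IsUnit t ∧ r * t ∈ Algebra.adjoin k (s : Set R))
    {K : ℕ} (hK : ∀ (i : Fin D.n) (m : ℕ),
      ∀ x ∈ Submodule.span k (s : Set R) ^ (s.card * p + p * m),
        D.φ i x ∈ Submodule.span k (s : Set R) ^ (K + m))
    {n : ℕ} {b : Ideal R} (hb : IsGenIn (Submodule.span k (s : Set R) ^ (p * n)) b) :
    IsGenIn (Submodule.span k (s : Set R) ^ (K + n)) (D.root b) := by
  refine Ideal.span_le.2 ?_
  rintro _ ⟨i, x, hx, rfl⟩
  set J := Ideal.span ((D.root b : Set R) ∩ (Submodule.span k (s : Set R) ^ (K + n) : Submodule k R))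
  have key : ∀ r, D.φ i (r * x) ∈ J := by
    have hx' := hb hx
    clear hx
    induction hx' using Submodule.span_induction with
    | mem g hg =>
      intro r
      have hr := mem_closure_pow_mul (p := p) h1 hloc r
      induction hr using AddSubmonoid.closure_induction with
      | mem r hr =>
        obtain ⟨y, w, hw, rfl⟩ := hr
        rw [mul_assoc, D.φ_pow_mul]
        refine J.mul_mem_left _ (Ideal.subset_span ⟨?_, hK i n _ ?_⟩)
        · exact D.φ_mem_root (b.mul_mem_left _ hg.1) i
        · rw [pow_add]
          exact Submodule.mul_mem_mul hw hg.2
      | zero => simp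
      | add x y _ _ hx hy => rw [add_mul, map_add]; exact add_mem hx hy
    | zero => intro r; simp
    | add x y _ _ hx hy => intro r; rw [mul_add, map_add]; exact add_mem (hx r) (hy r)
    | smul a x _ hx => intro r; rw [smul_eq_mul, ← mul_assoc]; exact hx _
  simpa using key 1

/-- The bound `r + 2 K` is stable under iteration because `r p^{e+1} + 2 K ≤ p (r p^e + K)`. -/
theorem isGenIn_iterate_root (D : FrobeniusDual R p) {s : Finset R} (h1 : (1 : R) ∈ s)
    (hloc : ∀ r : R, ∃ t ∈ Algebra.adjoin k (s : Set R),
      IsUnit t ∧ r * t ∈ Algebra.adjoin k (s : Set R))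
    {K : ℕ} (hK : ∀ (i : Fin D.n) (m : ℕ),
      ∀ x ∈ Submodule.span k (s : Set R) ^ (s.card * p + p * m),
        D.φ i x ∈ Submodule.span k (s : Set R) ^ (K + m))
    (r e : ℕ) {b : Ideal R}
    (hb : IsGenIn (Submodule.span k (s : Set R) ^ (r * p ^ e + 2 * K)) b) :
    IsGenIn (Submodule.span k (s : Set R) ^ (r + 2 * K)) (D.root^[e] b) := by
  have h1' : (1 : R) ∈ Submodule.span k (s : Set R) := Submodule.subset_span h1
  induction e generalizing b with
  | zero => simpa using hb
  | succ e ih =>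
    rw [Function.iterate_succ_apply]
    refine ih ?_
    have hle : r * p ^ (e + 1) + 2 * K ≤ p * (r * p ^ e + K) := by
      have : 2 * K ≤ p * K := Nat.mul_le_mul_right _ (Fact.out : p.Prime).two_le
      rw [pow_succ, mul_add]
      nlinarith
    refine (D.isGenIn_root h1 hloc hK (hb.mono (span_pow_mono h1' hle))).mono ?_
    exact span_pow_mono h1' (by omega)

end FrobeniusDual

/-! ### Test ideals and jumping exponents -/

theorem ceil_mul_pow_succ_le (p : ℕ) (c : ℝ) (e : ℕ) :
    ⌈c * (p : ℝ) ^ (e + 1)⌉₊ ≤ p * ⌈c * (p : ℝ) ^ e⌉₊ := by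
  refine Nat.ceil_le.2 ?_
  push_cast
  calc c * (p : ℝ) ^ (e + 1) = p * (c * (p : ℝ) ^ e) := by ring
    _ ≤ _ := mul_le_mul_of_nonneg_left (Nat.le_ceil _) (Nat.cast_nonneg _)

section TestIdeal

variable {R : Type*} [CommRing R] {p : ℕ} [Fact p.Prime]

variable [CharP R p]

/-- The increasing union defining the test ideal stabilizes. -/
theorem exists_testIdeal_eq [IsNoetherianRing R] (D : FrobeniusDual R p) (a : Ideal R) (c : ℝ) :
    ∃ e₀, ∀ e ≥ e₀, testIdeal p a c = D.root^[e] (a ^ ⌈c * (p : ℝ) ^ e⌉₊) := by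
  let T : ℕ →o Ideal R := ⟨fun e => D.root^[e + 1] (a ^ ⌈c * (p : ℝ) ^ (e + 1)⌉₊),
    monotone_nat_of_le_succ fun e => by
      rw [Function.iterate_succ_apply D.root (e + 1)]
      exact D.root_mono.iterate _ (D.pow_le_root_pow a (ceil_mul_pow_succ_le p c (e + 1)))⟩
  obtain ⟨n, hn⟩ := monotone_stabilizes_iff_noetherian.2 ‹IsNoetherianRing R› T
  have h : testIdeal p a c = T n := by
    unfold testIdeal
    simp_rw [D.frobRoot_eq]
    refine le_antisymm (iSup_le fun e => ?_) (le_iSup (fun e => T e) n)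
    change T e ≤ T n
    rcases le_total e n with h | h
    · exact T.monotone h
    · exact (hn e h).ge
  refine ⟨n + 1, fun e he => ?_⟩
  obtain ⟨e, rfl⟩ : ∃ m, e = m + 1 := ⟨e - 1, by omega⟩
  rw [h, hn e (by omega)]
  rfl

theorem testIdeal_antitone (D : FrobeniusDual R p) (a : Ideal R) : Antitone (testIdeal p a) := by
  intro c d h
  refine iSup_mono fun e => ?_
  rw [D.frobRoot_eq, D.frobRoot_eq]
  refine D.root_mono.iterate _ (Ideal.pow_le_pow_right (Nat.ceil_mono ?_))
  gcongr

/-- `τ(a^{pc})^{[1/p]} = τ(a^c)`. -/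
theorem root_testIdeal [IsNoetherianRing R] (D : FrobeniusDual R p) (a : Ideal R) (c : ℝ) :
    D.root (testIdeal p a (p * c)) = testIdeal p a c := by
  obtain ⟨m, hm⟩ := exists_testIdeal_eq D a (p * c)
  obtain ⟨n, hn⟩ := exists_testIdeal_eq D a c
  rw [hm (max m n) (le_max_left _ _), hn (max m n + 1) (by omega), Function.iterate_succ_apply',
    show (p : ℝ) * c * p ^ max m n = c * p ^ (max m n + 1) by ring]

/-- The ideal-theoretic input to Skoda's theorem: `a^N = a^{[q]} a^{N-q}` for `N` large compared to
`q` times the number of generators of `a`. -/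
theorem pow_eq_map_mul_pow {s : Finset R} {a : Ideal R} (hs : Ideal.span (s : Set R) = a) {e N : ℕ}
    (hN : (s.card + 1) * p ^ e ≤ N) :
    a ^ N = a.map (iterateFrobenius R p e) * a ^ (N - p ^ e) := by
  have hq : 0 < p ^ e := pow_pos (Fact.out : p.Prime).pos e
  have hqN : p ^ e ≤ N := le_trans (by nlinarith) hN
  refine le_antisymm ?_ ?_
  · have hlt : s.card * (p ^ e - 1) < N :=
      lt_of_le_of_lt (Nat.mul_le_mul_left _ (Nat.sub_le _ _)) (by nlinarith)
    have := span_pow_le_span_pow_mul (k := R) s hlt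
    subst hs
    refine this.trans (Submodule.span_le.2 ?_)
    rintro _ ⟨y, hy, w, hw, rfl⟩
    exact Ideal.mul_mem_mul
      (Ideal.mem_map_of_mem (iterateFrobenius R p e) (Ideal.subset_span hy)) hw
  · have h1 : a.map (iterateFrobenius R p e) ≤ a ^ p ^ e :=
      Ideal.map_le_iff_le_comap.2 fun x hx => Ideal.pow_mem_pow hx _
    calc _ ≤ a ^ p ^ e * a ^ (N - p ^ e) := Ideal.mul_mono_left h1
      _ = a ^ N := by rw [← pow_add, Nat.add_sub_cancel' hqN]

/-- Skoda's theorem: `τ(a^c) = a τ(a^{c-1})` once `c` is at least one more than the number of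
generators of `a`. -/
theorem testIdeal_skoda_s19 [IsNoetherianRing R] (D : FrobeniusDual R p) {s : Finset R} {a : Ideal R}
    (hs : Ideal.span (s : Set R) = a) {c : ℝ} (hc : (s.card : ℝ) + 1 ≤ c) :
    testIdeal p a c = a * testIdeal p a (c - 1) := by
  obtain ⟨m, hm⟩ := exists_testIdeal_eq D a c
  obtain ⟨n, hn⟩ := exists_testIdeal_eq D a (c - 1)
  set e := max m n
  rw [hm e (le_max_left _ _), hn e (le_max_right _ _), ← D.iterate_root_map_mul]
  have hp : (0 : ℝ) < (p : ℝ) ^ e := pow_pos (Nat.cast_pos.2 (Fact.out : p.Prime).pos) e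
  have hN : (s.card + 1) * p ^ e ≤ ⌈c * (p : ℝ) ^ e⌉₊ := by
    have : (((s.card + 1) * p ^ e : ℕ) : ℝ) ≤ ⌈c * (p : ℝ) ^ e⌉₊ := by
      push_cast
      exact (mul_le_mul_of_nonneg_right hc hp.le).trans (Nat.le_ceil _)
    exact_mod_cast this
  have hsub : ⌈(c - 1) * (p : ℝ) ^ e⌉₊ = ⌈c * (p : ℝ) ^ e⌉₊ - p ^ e := by
    rw [sub_mul, one_mul, ← Nat.cast_pow, Nat.ceil_sub_natCast]
  rw [hsub, ← pow_eq_map_mul_pow hs hN]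

theorem IsFJumpingExponent.mul_prime [IsNoetherianRing R] (D : FrobeniusDual R p)
    {a : Ideal R} {α : ℝ}
    (h : IsFJumpingExponent p a α) : IsFJumpingExponent p a (p * α) := by
  have hp : (0 : ℝ) < p := Nat.cast_pos.2 (Fact.out : p.Prime).pos
  refine ⟨mul_pos hp h.1, fun c hc hlt heq => ?_⟩
  refine h.2 (c / p) (div_nonneg hc hp.le) (by rwa [div_lt_iff₀' hp]) ?_
  have h1 := root_testIdeal D a (c / p)
  rw [mul_div_cancel₀ _ hp.ne'] at h1
  rw [← h1, ← root_testIdeal D a α, heq]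

theorem IsFJumpingExponent.sub_one_s19 [IsNoetherianRing R] (D : FrobeniusDual R p)
    {s : Finset R} {a : Ideal R}
    (hs : Ideal.span (s : Set R) = a) {α : ℝ} (h : IsFJumpingExponent p a α)
    (hα : (s.card : ℝ) + 1 < α) : IsFJumpingExponent p a (α - 1) := by
  have hs0 : (0 : ℝ) ≤ s.card := Nat.cast_nonneg _
  refine ⟨by linarith, fun c hc hlt heq => ?_⟩
  -- between `c` and `α - 1` the test ideal is constant, so `c` may be raised to `s.card`
  have hmax : max c s.card < α - 1 := max_lt hlt (by linarith)
  have heq' : testIdeal p a (max c s.card) = testIdeal p a (α - 1) :=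
    le_antisymm ((testIdeal_antitone D a (le_max_left _ _)).trans heq.le)
      (testIdeal_antitone D a hmax.le)
  refine h.2 (max c s.card + 1) (by positivity) (by linarith) ?_
  rw [testIdeal_skoda_s19 D hs hα.le, testIdeal_skoda_s19 D hs (by linarith [le_max_right c s.card]),
    add_sub_cancel_right, heq']

/-- Integer translates of a jumping exponent down to the bounded range where Skoda's theorem stops
applying. -/
theorem IsFJumpingExponent.exists_sub_nat [IsNoetherianRing R] (D : FrobeniusDual R p)
    {s : Finset R} {a : Ideal R}
    (hs : Ideal.span (s : Set R) = a) {α : ℝ} (h : IsFJumpingExponent p a α) :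
    ∃ m : ℕ, IsFJumpingExponent p a (α - m) ∧ α - m ≤ s.card + 1 := by
  obtain ⟨n, hn⟩ := exists_nat_ge (α - (s.card + 1))
  induction n generalizing α with
  | zero => exact ⟨0, by simpa using h, by simpa using hn⟩
  | succ n ih =>
    by_cases hα : α ≤ s.card + 1
    · exact ⟨0, by simpa using h, by simpa using hα⟩
    · push Not at hα
      push_cast at hn
      obtain ⟨m, hm, hm'⟩ := ih (IsFJumpingExponent.sub_one_s19 D hs h hα) (by linarith)
      refine ⟨m + 1, ?_, ?_⟩
      · convert hm using 1; push_cast; ring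
      · push_cast; linarith

theorem IsFJumpingExponent.pow_mul [IsNoetherianRing R] (D : FrobeniusDual R p) {a : Ideal R} {α : ℝ}
    (h : IsFJumpingExponent p a α) (e : ℕ) : IsFJumpingExponent p a (p ^ e * α) := by
  induction e with
  | zero => simpa using h
  | succ e ih => rw [pow_succ', mul_assoc]; exact IsFJumpingExponent.mul_prime D ih

end TestIdeal

open scoped Pointwise in
/-- There are finitely many test ideals `τ(a^c)` with bounded exponent `c`: they form a chain of
ideals generated in bounded degree. -/
theorem finite_testIdeal {k R : Type*} (p : ℕ) [Fact p.Prime] [Field k] [CharP k p]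
    [CommRing R] [IsNoetherianRing R] [CharP R p] [Algebra k R] [Algebra.EssFiniteType k R]
    (hk : (frobenius k p).Finite) (D₀ : FrobeniusDual R p) (a : Ideal R) (r : ℕ) :
    (testIdeal p a '' Set.Iic (r : ℝ)).Finite := by
  classical
  obtain ⟨σ, hσ⟩ := (Algebra.essFiniteType_iff (R := k) (S := R)).1 inferInstance
  obtain ⟨s₀, hs₀⟩ := (isNoetherianRing_iff_ideal_fg R).1 ‹_› a
  let s : Finset R := insert 1 (σ ∪ s₀)
  have h1 : (1 : R) ∈ s := Finset.mem_insert_self _ _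
  have hloc : ∀ r : R, ∃ t ∈ Algebra.adjoin k (s : Set R),
      IsUnit t ∧ r * t ∈ Algebra.adjoin k (s : Set R) := by
    have hle : Algebra.adjoin k (σ : Set R) ≤ Algebra.adjoin k (s : Set R) :=
      Algebra.adjoin_mono fun x hx => by simp [s, Finset.mem_coe.1 hx]
    intro r
    obtain ⟨t, ht, hu, hr⟩ := hσ r
    exact ⟨t, hle ht, hu, hle hr⟩
  obtain ⟨D, K, hK⟩ := D₀.exists_gauge hk h1 hloc
  set W := Submodule.span k (s : Set R) with hW
  have h1' : (1 : R) ∈ W := Submodule.subset_span h1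
  have hfin : Module.Finite k ↥(W ^ (r + 2 * K)) :=
    Module.Finite.iff_fg.2 ((Submodule.fg_span s.finite_toSet).pow _)
  refine finite_of_isGenIn (W ^ (r + 2 * K)) _ ?_ ?_
  · rintro _ ⟨c, -, rfl⟩ _ ⟨d, -, rfl⟩
    rcases le_total c d with h | h
    · exact Or.inr (testIdeal_antitone D a h)
    · exact Or.inl (testIdeal_antitone D a h)
  · rintro _ ⟨c, hc, rfl⟩
    obtain ⟨e, he⟩ := exists_testIdeal_eq D a c
    rw [he e le_rfl]
    refine D.isGenIn_iterate_root h1 hloc hK r e ?_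
    have hN : ⌈c * (p : ℝ) ^ e⌉₊ ≤ r * p ^ e := by
      refine Nat.ceil_le.2 ?_
      push_cast
      exact mul_le_mul_of_nonneg_right hc (by positivity)
    refine IsGenIn.mono (span_pow_mono h1' (hN.trans (Nat.le_add_right _ (2 * K)))) ?_
    generalize ⌈c * (p : ℝ) ^ e⌉₊ = N
    have hspan : a ^ N = Ideal.span ((s₀ : Set R) ^ N) := by
      rw [← hs₀]; exact Submodule.span_pow _ _
    have hsub : (s₀ : Set R) ^ N ⊆ ((W ^ N : Submodule k R) : Set R) := by
      rw [hW, Submodule.span_pow]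
      refine subset_trans (Set.pow_subset_pow_left ?_) Submodule.subset_span
      intro x hx
      simp [s, Finset.mem_coe.1 hx]
    unfold IsGenIn
    conv_lhs => rw [hspan]
    refine Ideal.span_mono (Set.subset_inter ?_ hsub)
    rw [hspan]
    exact Ideal.subset_span

/-- rationality: every F-jumping exponent of an ideal in a
regular F-finite ring essentially of finite type over a field is rational. -/
theorem stmt19_jumping_exponents_rational
    (p : ℕ) [Fact p.Prime] (k : Type*) [Field k] [CharP k p]
    (R : Type*) [CommRing R] [IsNoetherianRing R] [CharP R p] [Algebra k R]
    [Algebra.EssFiniteType k R]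
    (hfin : (frobenius R p).Finite) (hflat : (frobenius R p).Flat)
    (a : Ideal R) (α : ℝ) (hα : IsFJumpingExponent p a α) :
    ∃ q : ℚ, α = (q : ℝ) := by
  have : Nontrivial R := by
    by_contra hR
    rw [not_nontrivial_iff_subsingleton] at hR
    exact hα.2 0 le_rfl hα.1 (Subsingleton.elim _ _)
  obtain ⟨D⟩ := exists_frobeniusDual p hfin hflat
  obtain ⟨s, hs⟩ := (isNoetherianRing_iff_ideal_fg R).1 ‹_› a
  have hfinite : {β : ℝ | IsFJumpingExponent p a β ∧ β ≤ s.card + 1}.Finite := by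
    refine Set.Finite.of_injOn (f := testIdeal p a) ?_ ?_
      (finite_testIdeal p (frobenius_finite_base (k := k) p hfin) D a (s.card + 1))
    · rintro β ⟨-, hβ⟩
      exact ⟨β, by simpa using hβ, rfl⟩
    · rintro β ⟨hβ, -⟩ γ ⟨hγ, -⟩ h
      rcases lt_trichotomy β γ with hlt | heq | hlt
      · exact absurd h (hγ.2 β hβ.1.le hlt)
      · exact heq
      · exact absurd h.symm (hβ.2 γ hγ.1.le hlt)
  choose m hm hm' using fun e : ℕ =>
    IsFJumpingExponent.exists_sub_nat D hs (IsFJumpingExponent.pow_mul D hα e)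
  -- two of the infinitely many exponents `p ^ e * α - m e` coincide
  have hmaps : Set.MapsTo (fun e : ℕ => (p : ℝ) ^ e * α - m e) Set.univ
      {β : ℝ | IsFJumpingExponent p a β ∧ β ≤ s.card + 1} := fun e _ => ⟨hm e, hm' e⟩
  obtain ⟨e, -, e', -, hne, heq⟩ := Set.infinite_univ.exists_ne_map_eq_of_mapsTo hmaps hfinite
  replace heq : (p : ℝ) ^ e * α - m e = (p : ℝ) ^ e' * α - m e' := heq
  have hpne : (p : ℝ) ^ e - (p : ℝ) ^ e' ≠ 0 := by
    rw [sub_ne_zero]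
    have := (Nat.pow_right_injective (Fact.out : p.Prime).two_le).ne hne
    exact_mod_cast this
  refine ⟨((m e : ℚ) - m e') / ((p : ℚ) ^ e - (p : ℚ) ^ e'), ?_⟩
  push_cast
  rw [eq_div_iff hpne]
  linarith
end
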